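/- arXiv:1211.5338 — 10 statements merged into one kernel-verified Lean document; each statement's English description precedes it below -/
import Mathlib

section
/- Let p be a tropical Plücker vector of rank m on {1,…,n}. Then supp(p) satisfies the basis exchange property: for all A, B ∈ supp(p) and every a ∈ A∖B there exists b ∈ B∖A with (A∖{a})∪{b} ∈ supp(p). In particular, if supp(p) is nonempty then there exists a matroid on {1,…,n} whose set of bases is exactly supp(p). -/
open Finset

def IsTropPlucker (n m : ℕ) (p : Finset (Fin n) → WithTop ℝ) : Prop :=
  ∀ S T : Finset (Fin n), S.card = m - 1 → T.card = m + 1 →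
    ∀ i ∈ T \ S, ∃ j ∈ T \ S, j ≠ i ∧
      p (insert j S) + p (T.erase j) ≤ p (insert i S) + p (T.erase i)

def suppMem (n m : ℕ) (p : Finset (Fin n) → WithTop ℝ) (B : Finset (Fin n)) : Prop :=
  B.card = m ∧ p B ≠ ⊤

def circVec (n : ℕ) (p : Finset (Fin n) → WithTop ℝ) (S : Finset (Fin n)) :
    Fin n → WithTop ℝ := fun i => if i ∈ S then p (S.erase i) else ⊤

def TropOrth (n : ℕ) (x y : Fin n → WithTop ℝ) : Prop :=
  (∀ i, x i + y i = ⊤) ∨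
    ∃ i j : Fin n, i ≠ j ∧ x i + y i = x j + y j ∧ ∀ k, x i + y i ≤ x k + y k

def memL (n m : ℕ) (p : Finset (Fin n) → WithTop ℝ) (x : Fin n → WithTop ℝ) : Prop :=
  ∀ S : Finset (Fin n), S.card = m + 1 → TropOrth n x (circVec n p S)

noncomputable def wgt (n : ℕ) (p : Finset (Fin n) → WithTop ℝ) (v : Fin n → ℝ)
    (B : Finset (Fin n)) : ℝ := -((p B).untopD 0) + ∑ i ∈ B, v i

def memSigma (n m : ℕ) (p : Finset (Fin n) → WithTop ℝ) (B : Finset (Fin n))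
    (v : Fin n → ℝ) : Prop :=
  ∀ A : Finset (Fin n), suppMem n m p A → wgt n p v A ≤ wgt n p v B

def memLocal (n m : ℕ) (p : Finset (Fin n) → WithTop ℝ) (B : Finset (Fin n))
    (v : Fin n → ℝ) : Prop :=
  memSigma n m p B v ∧ memL n m p (fun i => (v i : WithTop ℝ))

noncomputable def fB (n : ℕ) (p : Finset (Fin n) → WithTop ℝ) (B : Finset (Fin n))
    (x : {i : Fin n // i ∈ B} → ℝ) : Fin n → ℝ := fun i =>
  if h : i ∈ B then x ⟨i, h⟩
  else (B.attach.inf fun b => (x b : WithTop ℝ) + p ((insert i B).erase b.1)).untopD 0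
    - (p B).untopD 0

noncomputable def augMat (n : ℕ) (B : Finset (Fin n))
    (V : {i : Fin n // i ∈ B} → {j : Fin n // j ∉ B} → WithTop ℝ) :
    {i : Fin n // i ∈ B} → Fin n → WithTop ℝ := fun i j =>
  if h : j ∈ B then (if j = i.1 then 0 else ⊤) else V i ⟨j, h⟩

noncomputable def tauV (n : ℕ) (B : Finset (Fin n))
    (V : {i : Fin n // i ∈ B} → {j : Fin n // j ∉ B} → WithTop ℝ)
    (A : Finset (Fin n)) : WithTop ℝ :=
  Finset.univ.inf fun σ : {i : Fin n // i ∈ B} ≃ {j : Fin n // j ∈ A} =>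
    ∑ i : {i : Fin n // i ∈ B}, augMat n B V i (σ i).1

/-! Apply the tropical Plücker relation to `S = A \ {a}` and `T = B ∪ {a}`. Its term at `a` is
`p A + p B`, which is finite, so the minimum is finite and is attained at a second index `b ≠ a`.
Then `b ∈ B \ A`, and finiteness of the term `p (S ∪ {b}) + p (T \ {b})` puts `S ∪ {b}` in the
support. -/

section BasisExchange

variable {α : Type*} [DecidableEq α]

/-- The basis exchange property of a family `𝓑` of finite sets, the counterpart for finsets of
`Matroid.ExchangeProperty`. -/
def HasBasisExchange (𝓑 : Set (Finset α)) : Prop :=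
  ∀ A B : Finset α, A ∈ 𝓑 → B ∈ 𝓑 → ∀ a ∈ A \ B, ∃ b ∈ B \ A, insert b (A.erase a) ∈ 𝓑

theorem HasBasisExchange.exchangeProperty {𝓑 : Set (Finset α)} (h : HasBasisExchange 𝓑) :
    Matroid.ExchangeProperty fun S : Set α => ∃ A : Finset α, (A : Set α) = S ∧ A ∈ 𝓑 := by
  rintro _ _ ⟨A, rfl, hA⟩ ⟨B, rfl, hB⟩ a ha
  obtain ⟨b, hb, hbA⟩ := h A B hA hB a (by exact_mod_cast ha)
  exact ⟨b, by exact_mod_cast hb, insert b (A.erase a), by push_cast; rfl, hbA⟩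

theorem HasBasisExchange.exists_matroid {𝓑 : Set (Finset α)} (h : HasBasisExchange 𝓑)
    (hne : 𝓑.Nonempty) :
    ∃ M : Matroid α, ∀ S : Set α,
      M.IsBase S ↔ ∃ A : Finset α, (A : Set α) = S ∧ A ∈ 𝓑 := by
  obtain ⟨B, hB⟩ := hne
  exact ⟨Matroid.ofExistsFiniteIsBase Set.univ _ ⟨B, ⟨B, rfl, hB⟩, B.finite_toSet⟩
    h.exchangeProperty fun S _ => S.subset_univ, fun _ => Iff.rfl⟩

end BasisExchange

section TropicalPlucker

variable {α Γ : Type*}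

/-- The support of a rank `m` tropical Plücker vector `p`. As `p` is a function on all finite sets,
the cardinality condition discards its values outside rank `m`. -/
def tropicalSupport (m : ℕ) (p : Finset α → WithTop Γ) : Set (Finset α) :=
  {B | B.card = m ∧ p B ≠ ⊤}

/-- Tropical Plücker vectors of rank `m` on an arbitrary ground set, with values in an arbitrary
ordered additive structure. That a minimum is attained twice or is `⊤` is encoded by requiring for
every index another one whose term is at most as large; the size of `S` is given by
`S.card + 1 = m` to avoid truncated subtraction. -/
def IsTropicalPlucker [DecidableEq α] [Add Γ] [LE Γ] (m : ℕ) (p : Finset α → WithTop Γ) : Prop :=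
  ∀ S T : Finset α, S.card + 1 = m → T.card = m + 1 →
    ∀ i ∈ T \ S, ∃ j ∈ T \ S, j ≠ i ∧
      p (insert j S) + p (T.erase j) ≤ p (insert i S) + p (T.erase i)

variable [DecidableEq α] [Add Γ] {m : ℕ} {p : Finset α → WithTop Γ}

theorem IsTropicalPlucker.exists_exchange_add_le [LE Γ] (hp : IsTropicalPlucker m p)
    {A B : Finset α} (hA : A.card = m) (hB : B.card = m) {a : α} (ha : a ∈ A \ B) :
    ∃ b ∈ B \ A, p (insert b (A.erase a)) + p ((insert a B).erase b) ≤ p A + p B := by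
  obtain ⟨haA, haB⟩ := mem_sdiff.mp ha
  obtain ⟨b, hb, hba, hle⟩ := hp (A.erase a) (insert a B)
    (by rw [card_erase_add_one haA, hA]) (by rw [card_insert_of_notMem haB, hB]) a (by simp)
  rw [insert_erase haA, erase_insert haB] at hle
  exact ⟨b, by simp_all, hle⟩

theorem IsTropicalPlucker.hasBasisExchange [PartialOrder Γ] (hp : IsTropicalPlucker m p) :
    HasBasisExchange (tropicalSupport m p) := by
  rintro A B ⟨hAm, hpA⟩ ⟨hBm, hpB⟩ a ha
  obtain ⟨b, hb, hle⟩ := hp.exists_exchange_add_le hAm hBm ha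
  have hfin := ne_top_of_le_ne_top (WithTop.add_ne_top.mpr ⟨hpA, hpB⟩) hle
  have hcard : (insert b (A.erase a)).card = m := by
    have hbA : b ∉ A.erase a := fun h => (mem_sdiff.mp hb).2 (mem_of_mem_erase h)
    rw [card_insert_of_notMem hbA, card_erase_add_one (mem_sdiff.mp ha).1, hAm]
  exact ⟨b, hb, hcard, (WithTop.add_ne_top.mp hfin).1⟩

theorem supp_basis_exchange_general [PartialOrder Γ] (hp : IsTropicalPlucker m p) :
    HasBasisExchange (tropicalSupport m p) ∧
      ((tropicalSupport m p).Nonempty →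
        ∃ M : Matroid α, ∀ S : Set α,
          M.IsBase S ↔ ∃ A : Finset α, (A : Set α) = S ∧ A ∈ tropicalSupport m p) :=
  ⟨hp.hasBasisExchange, hp.hasBasisExchange.exists_matroid⟩

end TropicalPlucker

/-- The support of a tropical Plücker vector satisfies the basis
exchange property; in particular, if nonempty, it is the set of bases of a matroid. -/
theorem supp_basis_exchange (n m : ℕ) (hm : 1 ≤ m) (hmn : m ≤ n)
    (p : Finset (Fin n) → WithTop ℝ) (hp : IsTropPlucker n m p) :
    (∀ A B : Finset (Fin n), suppMem n m p A → suppMem n m p B →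
      ∀ a ∈ A \ B, ∃ b ∈ B \ A, suppMem n m p (insert b (A.erase a))) ∧
    ((∃ B, suppMem n m p B) →
      ∃ M : Matroid (Fin n), ∀ S : Set (Fin n),
        M.IsBase S ↔ ∃ A : Finset (Fin n), (A : Set (Fin n)) = S ∧ suppMem n m p A) :=
  supp_basis_exchange_general fun S T hS hT => hp S T (by omega) hT
end

section
/- Let p be a tropical Plücker vector of rank m on {1,…,n} and let d, e ∈ 𝕋ⁿ be circuits of p. If a, b ∈ {1,…,n} satisfy d_a < e_a and d_b = e_b ≠ ∞, then there exists a circuit f of p with f_b = ∞, f_a = d_a, and f_i ≥ min(d_i, e_i) for every i ∈ {1,…,n}. -/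
open Finset

/-- A circuit of `p`: a vector of the form `c_S + λ·𝟏` for some `(m+1)`-subset `S`
with `c_S` not identically `∞` and some `λ ∈ ℝ`. -/
def IsCircuitOf (n m : ℕ) (p : Finset (Fin n) → WithTop ℝ) (d : Fin n → WithTop ℝ) : Prop :=
  ∃ (S : Finset (Fin n)) (lam : ℝ), S.card = m + 1 ∧ (∃ i, circVec n p S i ≠ ⊤) ∧
    ∀ i, d i = circVec n p S i + (lam : WithTop ℝ)

/-!
For a vector `x` of `p` and an index `a` with `x a` finite, a basis `B` minimizing
`p B + ∑ i ∈ B, x i` can be chosen to avoid `a`, and its minimality says that the circuit supported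
in `B ∪ {a}`, scaled to agree with `x` at `a`, dominates `x`. Infinite entries of `x` are first
truncated at a large real. Only the relations of `x` involving `a` matter here, and these hold for
`min d e` with its `b`-th entry raised to `⊤`, so the circuit so obtained eliminates `b`.
-/

variable {α Γ : Type*}

lemma card_insert_erase_of_notMem [DecidableEq α] {B : Finset α} {i j : α} (hi : i ∈ B)
    (hj : j ∉ B) : #(insert j (B.erase i)) = #B := by
  rw [card_insert_of_notMem fun h ↦ hj (mem_of_mem_erase h), card_erase_add_one hi]

section TropWeight

variable [AddCommMonoid Γ]

/-- The valuation of `B` after adding the weight `v i` to each of its elements `i`: the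
quantity that the basis supporting the eliminating circuit minimizes. -/
def tropWeight (p : Finset α → WithTop Γ) (v : α → WithTop Γ) (B : Finset α) : WithTop Γ :=
  p B + ∑ i ∈ B, v i

variable {p : Finset α → WithTop Γ} {v : α → WithTop Γ}

lemma exists_tropWeight_minimizer [Finite α] [LinearOrder Γ] {m : ℕ}
    (hp : ∃ B, #B = m ∧ p B ≠ ⊤) (hv : ∀ i, v i ≠ ⊤) :
    ∃ B, #B = m ∧ p B ≠ ⊤ ∧ ∀ A, #A = m → tropWeight p v B ≤ tropWeight p v A := by
  obtain ⟨B, hB, hmin⟩ :=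
    Set.exists_min_image {B : Finset α | #B = m} (tropWeight p v) (Set.toFinite _)
      (hp.imp fun _ ↦ And.left)
  obtain ⟨B₀, hB₀, hpB₀⟩ := hp
  have hfin : tropWeight p v B₀ ≠ ⊤ :=
    WithTop.add_ne_top.2 ⟨hpB₀, WithTop.sum_ne_top.2 fun i _ ↦ hv i⟩
  exact ⟨B, hB, (WithTop.add_ne_top.1 (ne_top_of_le_ne_top hfin (hmin B₀ hB₀))).1, hmin⟩

variable [DecidableEq α] {i j : α} {B : Finset α}

lemma tropWeight_eq_add_sum_erase (hi : i ∈ B) :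
    tropWeight p v B = p B + v i + ∑ k ∈ B.erase i, v k := by
  rw [tropWeight, ← add_sum_erase _ _ hi, add_assoc]

lemma tropWeight_insert_erase (hj : j ∉ B) :
    tropWeight p v (insert j (B.erase i)) =
      p (insert j (B.erase i)) + v j + ∑ k ∈ B.erase i, v k := by
  rw [tropWeight, sum_insert fun h ↦ hj (mem_of_mem_erase h), add_assoc]

end TropWeight

variable [DecidableEq α]

/-- The vector `x` satisfies at `a` the relations of a vector of `p`: for no cocircuit
`j ↦ p (S ∪ {j})`, with `#S = m - 1` and `a ∉ S`, is the minimum of `p (S ∪ {j}) + x j` over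
`j ∉ S` finite and attained only at `j = a`. It is phrased through `B = S ∪ {a}`; `x` is a vector
of `p`, i.e. tropically orthogonal to all cocircuits, when this holds at every `a`. -/
def IsVectorAt [Add Γ] [LE Γ] (m : ℕ) (p : Finset α → WithTop Γ) (x : α → WithTop Γ) (a : α) :
    Prop :=
  ∀ B : Finset α, #B = m → a ∈ B → p B + x a ≠ ⊤ →
    ∃ j ∉ B, p (insert j (B.erase a)) + x j ≤ p B + x a

section Exchange

variable [AddCommMonoid Γ] [LinearOrder Γ] [IsOrderedCancelAddMonoid Γ] {m : ℕ}
  {p : Finset α → WithTop Γ} {x v d e : α → WithTop Γ} {a b i j : α} {B : Finset α}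

lemma IsVectorAt.min_const (hx : IsVectorAt m p x a) {M : WithTop Γ} (hM : x a ≤ M) :
    IsVectorAt m p (fun i ↦ min (x i) M) a := by
  intro B hB haB hfin
  simp only [min_eq_left hM] at hfin ⊢
  obtain ⟨j, hj, hle⟩ := hx B hB haB hfin
  exact ⟨j, hj, (add_le_add_right (min_le_left _ _) _).trans hle⟩

lemma IsVectorAt.update_min_top (hd : IsVectorAt m p d a) (he : IsVectorAt m p e b)
    (hab : d a < e a) (hb : e b ≤ d b) :
    IsVectorAt m p (Function.update (fun i ↦ min (d i) (e i)) b ⊤) a := by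
  have hne : a ≠ b := by
    rintro rfl
    exact hb.not_gt hab
  intro B hB haB hfin
  rw [Function.update_of_ne hne, min_eq_left hab.le] at hfin ⊢
  obtain ⟨j, hjB, hj⟩ := hd B hB haB hfin
  by_cases hjb : j = b
  · -- Exchange `b` further using `e`; this cannot bring back `a` because `d a < e a`.
    subst hjb
    have hj_erase : j ∉ B.erase a := fun h ↦ hjB (mem_of_mem_erase h)
    have hle : p (insert j (B.erase a)) + e j ≤ p B + d a := (add_le_add_right hb _).trans hj
    obtain ⟨k, hkB, hk⟩ := he (insert j (B.erase a))
      ((card_insert_erase_of_notMem haB hjB).trans hB)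
      (mem_insert_self _ _) (ne_top_of_le_ne_top hfin hle)
    rw [erase_insert hj_erase] at hk
    obtain ⟨hkj, hk_erase⟩ : k ≠ j ∧ k ∉ B.erase a := by simpa using hkB
    have hka : k ≠ a := by
      rintro rfl
      rw [insert_erase haB] at hk
      exact hab.not_ge
        (WithTop.le_of_add_le_add_left (WithTop.add_ne_top.1 hfin).1 (hk.trans hle))
    refine ⟨k, fun h ↦ hk_erase (mem_erase.2 ⟨hka, h⟩), ?_⟩
    rw [Function.update_of_ne hkj]
    exact (add_le_add_right (min_le_right _ _) _).trans (hk.trans hle)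
  · refine ⟨j, hjB, ?_⟩
    rw [Function.update_of_ne hjb]
    exact (add_le_add_right (min_le_left _ _) _).trans hj

lemma IsVectorAt.exists_tropWeight_minimizer_notMem [Finite α] (ha : IsVectorAt m p v a)
    (hp : ∃ B, #B = m ∧ p B ≠ ⊤) (hv : ∀ i, v i ≠ ⊤) :
    ∃ B, #B = m ∧ p B ≠ ⊤ ∧ a ∉ B ∧ ∀ A, #A = m → tropWeight p v B ≤ tropWeight p v A := by
  obtain ⟨B, hB, hpB, hmin⟩ := exists_tropWeight_minimizer hp hv
  by_cases haB : a ∈ B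
  · have hfin : p B + v a ≠ ⊤ := WithTop.add_ne_top.2 ⟨hpB, hv a⟩
    obtain ⟨j, hjB, hj⟩ := ha B hB haB hfin
    have hweight : tropWeight p v (insert j (B.erase a)) ≤ tropWeight p v B := by
      rw [tropWeight_insert_erase hjB, tropWeight_eq_add_sum_erase haB]
      exact add_le_add_left hj _
    exact ⟨insert j (B.erase a), (card_insert_erase_of_notMem haB hjB).trans hB,
      (WithTop.add_ne_top.1 (ne_top_of_le_ne_top hfin hj)).1,
      by simp [ne_of_mem_of_not_mem haB hjB], fun A hA ↦ hweight.trans (hmin A hA)⟩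
  · exact ⟨B, hB, hpB, haB, hmin⟩

lemma add_le_add_of_tropWeight_minimizer (hv : ∀ i, v i ≠ ⊤) (hB : #B = m)
    (hmin : ∀ A, #A = m → tropWeight p v B ≤ tropWeight p v A) (hi : i ∈ B) (hj : j ∉ B) :
    p B + v i ≤ p (insert j (B.erase i)) + v j := by
  have hle := hmin _ ((card_insert_erase_of_notMem hi hj).trans hB)
  rw [tropWeight_eq_add_sum_erase hi, tropWeight_insert_erase hj] at hle
  exact WithTop.le_of_add_le_add_right (WithTop.sum_ne_top.2 fun k _ ↦ hv k) hle

end Exchange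

section Truncation

variable [AddCommGroup Γ] [LinearOrder Γ] [IsOrderedAddMonoid Γ] [Nontrivial Γ]

lemma exists_coe_forall_add_lt_add {ι : Type*} [Finite ι] (q : ι → WithTop Γ)
    {c : WithTop Γ} (hc : c ≠ ⊤) : ∃ M : Γ, ∀ s t, q s ≠ ⊤ → q s + c < q t + M := by
  suffices h : ∀ᶠ M : Γ in Filter.atTop, ∀ s t, q s ≠ ⊤ → q s + c < q t + M from h.exists
  refine Filter.eventually_all.2 fun s ↦ Filter.eventually_all.2 fun t ↦ ?_
  by_cases hs : q s = ⊤
  · simp [hs]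
  obtain ⟨r, hr⟩ := WithTop.ne_top_iff_exists.1 (WithTop.add_ne_top.2 ⟨hs, hc⟩)
  rw [← hr]
  cases q t with
  | top => simp
  | coe u =>
    filter_upwards [Filter.eventually_gt_atTop (r - u)] with M hM _
    rw [← WithTop.coe_add, WithTop.coe_lt_coe]
    exact sub_lt_iff_lt_add'.1 hM

lemma IsVectorAt.exists_basis_add_le_add [Finite α] {m : ℕ} {p : Finset α → WithTop Γ}
    {x : α → WithTop Γ} {a : α} (hx : IsVectorAt m p x a) (hp : ∃ B, #B = m ∧ p B ≠ ⊤)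
    (ha : x a ≠ ⊤) :
    ∃ B, #B = m ∧ p B ≠ ⊤ ∧ a ∉ B ∧ ∀ i ∈ B, p B + x i ≤ p (insert a (B.erase i)) + x a := by
  obtain ⟨M, hM⟩ := exists_coe_forall_add_lt_add p ha
  have haM : x a ≤ M := by
    obtain ⟨B₀, -, hpB₀⟩ := hp
    exact WithTop.le_of_add_le_add_left hpB₀ (hM B₀ B₀ hpB₀).le
  have hfin (i : α) : min (x i) M ≠ ⊤ := ne_top_of_le_ne_top WithTop.coe_ne_top (min_le_right _ _)
  obtain ⟨B, hB, hpB, haB, hmin⟩ :=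
    (hx.min_const haM).exists_tropWeight_minimizer_notMem hp hfin
  refine ⟨B, hB, hpB, haB, fun i hi ↦ ?_⟩
  by_cases htop : p (insert a (B.erase i)) = ⊤
  · simp [htop]
  have hle := add_le_add_of_tropWeight_minimizer hfin hB hmin hi haB
  rw [min_eq_left haM] at hle
  rcases le_total (x i) M with hi_le | hM_le
  · rwa [min_eq_left hi_le] at hle
  · rw [min_eq_right hM_le] at hle
    exact absurd (hM _ B htop) hle.not_gt

end Truncation

section Circuits

variable {n m : ℕ} {p : Finset (Fin n) → WithTop ℝ} {d e x : Fin n → WithTop ℝ} {a b : Fin n}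

lemma IsCircuitOf.exists_suppMem (hd : IsCircuitOf n m p d) : ∃ B, suppMem n m p B := by
  obtain ⟨S, -, hS, ⟨i, hi⟩, -⟩ := hd
  obtain ⟨hiS, hpi⟩ : i ∈ S ∧ p (S.erase i) ≠ ⊤ := by simpa [circVec] using hi
  exact ⟨S.erase i, by rw [card_erase_of_mem hiS, hS, Nat.add_sub_cancel], hpi⟩

lemma IsCircuitOf.isVectorAt (hp : IsTropPlucker n m p) (hd : IsCircuitOf n m p d) (a : Fin n) :
    IsVectorAt m p d a := by
  obtain ⟨T, lam, hT, -, hd⟩ := hd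
  intro B hB haB hfin
  have haT : a ∈ T := by
    by_contra haT
    exact hfin (by simp [hd, circVec, haT])
  obtain ⟨j, hj, hja, hle⟩ := hp (B.erase a) T (by rw [card_erase_of_mem haB, hB]) hT a
    (by simp [haT])
  obtain ⟨hjT, hjB⟩ := mem_sdiff.1 hj
  refine ⟨j, fun h ↦ hjB (mem_erase.2 ⟨hja, h⟩), ?_⟩
  rw [insert_erase haB] at hle
  simp only [hd, circVec, hjT, haT, if_true, ← add_assoc]
  exact add_le_add_left hle _

lemma IsVectorAt.exists_le_isCircuitOf (hx : IsVectorAt m p x a) (hp : ∃ B, suppMem n m p B)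
    (ha : x a ≠ ⊤) : ∃ f, IsCircuitOf n m p f ∧ f a = x a ∧ x ≤ f := by
  obtain ⟨B, hB, hpB, haB, hmin⟩ := hx.exists_basis_add_le_add hp ha
  obtain ⟨r, hr⟩ := WithTop.ne_top_iff_exists.1 hpB
  obtain ⟨s, hs⟩ := WithTop.ne_top_iff_exists.1 ha
  have hshift (y : WithTop ℝ) : p B + (y + ((s - r : ℝ) : WithTop ℝ)) = y + x a := by
    rw [← hr, ← hs, add_left_comm, ← WithTop.coe_add, add_sub_cancel]
  have hcirc : circVec n p (insert a B) a = p B := by simp [circVec, erase_insert haB]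
  have hfa : circVec n p (insert a B) a + ((s - r : ℝ) : WithTop ℝ) = x a := by
    rw [hcirc, ← hr, ← hs, ← WithTop.coe_add, add_sub_cancel]
  refine ⟨fun i ↦ circVec n p (insert a B) i + ((s - r : ℝ) : WithTop ℝ),
    ⟨insert a B, s - r, by rw [card_insert_of_notMem haB, hB], ⟨a, by rwa [hcirc]⟩, fun _ ↦ rfl⟩,
    hfa, fun i ↦ ?_⟩
  rcases eq_or_ne i a with rfl | hia
  · exact hfa.ge
  by_cases hiB : i ∈ B
  · refine WithTop.le_of_add_le_add_left hpB ?_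
    rw [hshift, circVec, if_pos (mem_insert_of_mem hiB), erase_insert_of_ne hia.symm]
    exact hmin i hiB
  · simp [circVec, hia, hiB]

theorem valuated_elimination_general (hp : ∃ B, suppMem n m p B)
    (hd : IsVectorAt m p d a) (he : IsVectorAt m p e b) (hab : d a < e a) (hb : e b ≤ d b) :
    ∃ f : Fin n → WithTop ℝ, IsCircuitOf n m p f ∧ f b = ⊤ ∧ f a = d a ∧
      ∀ i, min (d i) (e i) ≤ f i := by
  have hne : a ≠ b := by
    rintro rfl
    exact hb.not_gt hab
  let x : Fin n → WithTop ℝ := Function.update (fun i ↦ min (d i) (e i)) b ⊤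
  have hxa : x a = d a := (Function.update_of_ne hne ..).trans (min_eq_left hab.le)
  have hxb : x b = ⊤ := Function.update_self ..
  have hmin_le : (fun i ↦ min (d i) (e i)) ≤ x := le_update_self_iff.2 le_top
  obtain ⟨f, hf, hfa, hxf⟩ :=
    (hd.update_min_top he hab hb).exists_le_isCircuitOf hp (hxa.trans_ne hab.ne_top)
  exact ⟨f, hf, top_le_iff.1 (hxb ▸ hxf b), hfa.trans hxa, fun i ↦ (hmin_le i).trans (hxf i)⟩

end Circuits

/-- Valuated elimination for circuits of a tropical Plücker vector. -/
theorem valuated_elimination (n m : ℕ) (hm : 1 ≤ m) (hmn : m ≤ n)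
    (p : Finset (Fin n) → WithTop ℝ) (hp : IsTropPlucker n m p)
    (d e : Fin n → WithTop ℝ) (hd : IsCircuitOf n m p d) (he : IsCircuitOf n m p e)
    (a b : Fin n) (hab : d a < e a) (hb : d b = e b) (hbne : e b ≠ ⊤) :
    ∃ f : Fin n → WithTop ℝ, IsCircuitOf n m p f ∧ f b = ⊤ ∧ f a = d a ∧
      ∀ i, min (d i) (e i) ≤ f i := by
  exact valuated_elimination_general hd.exists_suppMem (hd.isVectorAt hp a) (he.isVectorAt hp b)
    hab hb.ge
end

section
/- Let p be a tropical Plücker vector of rank m on {1,…,n}, and let S and T be (m+1)-element subsets of {1,…,n} such that c_S and c_T are not identically ∞ and have equal supports, i.e., {i : (c_S)_i ≠ ∞} = {i : (c_T)_i ≠ ∞}. Then there exists λ ∈ ℝ such that (c_T)_i = (c_S)_i + λ for all i ∈ {1,…,n} (where ∞ + λ = ∞). That is, two circuits of p with the same support differ by a real multiple of the all-ones vector. -/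
open Finset

/-!
Remove two elements `a`, `b` from `S` and apply the exchange relation to `S \ {a, b}` and `T` at the
index `a`: another index `j ∈ T` does at least as well. If `c_T` is finite only inside `S` and the
sum at `a` is finite, then `j = b` is the only choice. Exchanging the roles of `a` and `b` turns the
inequality into `c_S a + c_T b = c_S b + c_T a`, so `c_T` and `c_S` differ by a constant.
-/

theorem exists_forall_eq_add_coe_of_add_comm {ι α : Type*} [AddCommGroup α] {c d : ι → WithTop α}
    (hc : ∃ i, c i ≠ ⊤) (hd : ∃ i, d i ≠ ⊤) (hcd : ∀ i j, c i + d j = c j + d i) :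
    ∃ lam : α, ∀ i, d i = c i + lam := by
  obtain ⟨a, hca⟩ := hc
  obtain ⟨b, hdb⟩ := hd
  have hda : d a ≠ ⊤ := by
    have hfinite : c b + d a ≠ ⊤ := hcd a b ▸ WithTop.add_ne_top.2 ⟨hca, hdb⟩
    exact (WithTop.add_ne_top.1 hfinite).2
  obtain ⟨x, hx⟩ := WithTop.ne_top_iff_exists.1 hca
  obtain ⟨y, hy⟩ := WithTop.ne_top_iff_exists.1 hda
  refine ⟨y - x, fun i => WithTop.add_left_cancel hca ?_⟩
  calc
    c a + d i = c i + d a := hcd a i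
    _ = c i + (c a + ↑(y - x)) := by rw [← hx, ← hy, ← WithTop.coe_add, add_sub_cancel]
    _ = c a + (c i + ↑(y - x)) := add_left_comm _ _ _

section Circuits

variable {n m : ℕ} {p : Finset (Fin n) → WithTop ℝ} {S T : Finset (Fin n)} {a b : Fin n}

theorem circVec_of_mem (ha : a ∈ S) : circVec n p S a = p (S.erase a) :=
  if_pos ha

theorem mem_of_circVec_ne_top (ha : circVec n p S a ≠ ⊤) : a ∈ S :=
  of_not_not fun haS => ha (if_neg haS)

namespace IsTropPlucker

theorem exists_insert_add_circVec_le (hp : IsTropPlucker n m p) (hS : S.card = m + 1)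
    (hT : T.card = m + 1) (haS : a ∈ S) (hbS : b ∈ S) (hab : a ≠ b) (haT : a ∈ T) :
    ∃ j ∈ T, (j ∈ S → j = b) ∧
      p (insert j ((S.erase a).erase b)) + circVec n p T j ≤
        circVec n p S b + circVec n p T a := by
  have hcard : ((S.erase a).erase b).card = m - 1 := by
    rw [card_erase_of_mem (mem_erase.2 ⟨hab.symm, hbS⟩), card_erase_of_mem haS, hS]
    rfl
  have hinsert : insert a ((S.erase a).erase b) = S.erase b := by
    rw [erase_right_comm, insert_erase (mem_erase.2 ⟨hab, haS⟩)]
  obtain ⟨j, hj, hja, hle⟩ := hp _ T hcard hT a (by simp [haT])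
  obtain ⟨hjT, hjS⟩ := mem_sdiff.1 hj
  refine ⟨j, hjT, fun hmem => by_contra fun hjb => hjS (by simp [hmem, hja, hjb]), ?_⟩
  rwa [circVec_of_mem hjT, circVec_of_mem hbS, circVec_of_mem haT, ← hinsert]

theorem circVec_add_circVec_le (hp : IsTropPlucker n m p) (hS : S.card = m + 1)
    (hT : T.card = m + 1) (hTS : ∀ i, circVec n p T i ≠ ⊤ → i ∈ S) (a b : Fin n) :
    circVec n p S a + circVec n p T b ≤ circVec n p S b + circVec n p T a := by
  rcases eq_or_ne a b with rfl | hab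
  · exact le_rfl
  rcases eq_or_ne (circVec n p S b + circVec n p T a) ⊤ with htop | hfinite
  · exact htop ▸ le_top
  obtain ⟨hb, ha⟩ := WithTop.add_ne_top.1 hfinite
  have hbS : b ∈ S := mem_of_circVec_ne_top hb
  have haS : a ∈ S := hTS a ha
  obtain ⟨j, -, hjb, hle⟩ :=
    hp.exists_insert_add_circVec_le hS hT haS hbS hab (mem_of_circVec_ne_top ha)
  have hj : circVec n p T j ≠ ⊤ := (WithTop.add_ne_top.1 (ne_top_of_le_ne_top hfinite hle)).2
  obtain rfl : j = b := hjb (hTS j hj)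
  rwa [insert_erase (mem_erase.2 ⟨hab.symm, hbS⟩), ← circVec_of_mem (p := p) haS] at hle

theorem circVec_add_circVec_comm (hp : IsTropPlucker n m p) (hS : S.card = m + 1)
    (hT : T.card = m + 1) (hTS : ∀ i, circVec n p T i ≠ ⊤ → i ∈ S) (a b : Fin n) :
    circVec n p S a + circVec n p T b = circVec n p S b + circVec n p T a :=
  (hp.circVec_add_circVec_le hS hT hTS a b).antisymm (hp.circVec_add_circVec_le hS hT hTS b a)

end IsTropPlucker

end Circuits

theorem circuits_same_support_general (n m : ℕ) (p : Finset (Fin n) → WithTop ℝ)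
    (hp : IsTropPlucker n m p) (S T : Finset (Fin n)) (hS : S.card = m + 1) (hT : T.card = m + 1)
    (hSne : ∃ i, circVec n p S i ≠ ⊤) (hTne : ∃ i, circVec n p T i ≠ ⊤)
    (hTS : ∀ i : Fin n, circVec n p T i ≠ ⊤ → i ∈ S) :
    ∃ lam : ℝ, ∀ i : Fin n, circVec n p T i = circVec n p S i + (lam : WithTop ℝ) :=
  exists_forall_eq_add_coe_of_add_comm hSne hTne (hp.circVec_add_circVec_comm hS hT hTS)

/-- Two circuits of a tropical Plücker vector with the same support
differ by a real multiple of the all-ones vector. -/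
theorem circuits_same_support (n m : ℕ) (hm : 1 ≤ m) (hmn : m ≤ n)
    (p : Finset (Fin n) → WithTop ℝ) (hp : IsTropPlucker n m p)
    (S T : Finset (Fin n)) (hS : S.card = m + 1) (hT : T.card = m + 1)
    (hSne : ∃ i, circVec n p S i ≠ ⊤) (hTne : ∃ i, circVec n p T i ≠ ⊤)
    (hsupp : ∀ i : Fin n, circVec n p S i ≠ ⊤ ↔ circVec n p T i ≠ ⊤) :
    ∃ lam : ℝ, ∀ i : Fin n, circVec n p T i = circVec n p S i + (lam : WithTop ℝ) :=
  circuits_same_support_general n m p hp S T hS hT hSne hTne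
    fun i hi => mem_of_circVec_ne_top ((hsupp i).2 hi)
end

section
/- Let p be a tropical Plücker vector of rank m on {1,…,n} with supp(p) nonempty, and let v ∈ ℝⁿ. Then v ∈ L(p) if and only if the matroid M_v of maximal v-weight bases is loopless; explicitly, v ∈ L(p) if and only if for every i ∈ {1,…,n} there exists B ∈ supp(p) with i ∈ B such that w_p(v,B) ≥ w_p(v,A) for every A ∈ supp(p). -/
open Finset

/-! In terms of weights, tropical orthogonality of `v` to the vectors `c_S` is a local improvement
property: for every basis `B` and every `i ∉ B` there is `j ∈ B` such that `B - j + i` is a basis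
whose weight is at least that of `B`. Applied to a basis of maximal weight, this produces a
maximal basis through `i`. Conversely, let `A` be a maximal basis through `i`. The tropical
Plücker relations say that the weight satisfies the exchange inequality of valuated matroids,
`w(A) + w(B) ≤ w(A - i + j) + w(B - j + i)` for some `j ∈ B \ A`; since `w(A - i + j) ≤ w(A)`, the
basis `B - j + i` weighs at least as much as `B`. -/

theorem forall_eq_top_or_min_attained_twice_iff {ι α : Type*} [Finite ι] [LinearOrder α]
    [OrderTop α] (f : ι → α) :
    ((∀ i, f i = ⊤) ∨ ∃ i j, i ≠ j ∧ f i = f j ∧ ∀ k, f i ≤ f k) ↔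
      ∀ i, f i ≠ ⊤ → ∃ j, j ≠ i ∧ f j ≤ f i := by
  constructor
  · rintro (htop | ⟨i, j, hij, heq, hmin⟩) k hk
    · exact absurd (htop k) hk
    · obtain rfl | hik := eq_or_ne i k
      · exact ⟨j, hij.symm, heq.ge⟩
      · exact ⟨i, hik, hmin k⟩
  · intro h
    by_cases htop : ∀ i, f i = ⊤
    · exact .inl htop
    obtain ⟨k, hk⟩ := not_forall.mp htop
    have : Nonempty ι := ⟨k⟩
    obtain ⟨i, hmin⟩ := Finite.exists_min f
    obtain ⟨j, hji, hle⟩ := h i (ne_top_of_le_ne_top hk (hmin k))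
    exact .inr ⟨i, j, hji.symm, (hmin j).antisymm hle, hmin⟩

theorem sum_insert_erase_add {ι M : Type*} [DecidableEq ι] [AddCommMonoid M] {B : Finset ι}
    {i j : ι} (f : ι → M) (hi : i ∉ B) (hj : j ∈ B) :
    ∑ k ∈ insert i (B.erase j), f k + f j = f i + ∑ k ∈ B, f k := by
  rw [sum_insert fun h => hi (mem_of_mem_erase h), add_assoc, sum_erase_add _ _ hj]

theorem card_insert_erase {ι : Type*} [DecidableEq ι] {B : Finset ι} {i j : ι}
    (hi : i ∉ B) (hj : j ∈ B) : (insert i (B.erase j)).card = B.card := by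
  rw [card_insert_of_notMem fun h => hi (mem_of_mem_erase h), card_erase_add_one hj]

section LinearSpace

variable {n m : ℕ} {p : Finset (Fin n) → WithTop ℝ}

theorem tropOrth_circVec_iff {x : Fin n → WithTop ℝ} {S : Finset (Fin n)} :
    TropOrth n x (circVec n p S) ↔ ∀ i ∈ S, x i + p (S.erase i) ≠ ⊤ →
      ∃ j ∈ S, j ≠ i ∧ x j + p (S.erase j) ≤ x i + p (S.erase i) := by
  have circVec_of_mem {i} (hi : i ∈ S) : circVec n p S i = p (S.erase i) := if_pos hi
  have circVec_of_notMem {i} (hi : i ∉ S) : circVec n p S i = ⊤ := if_neg hi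
  refine (forall_eq_top_or_min_attained_twice_iff fun i => x i + circVec n p S i).trans
    ⟨fun h i hi hfin => ?_, fun h i hfin => ?_⟩
  · rw [← circVec_of_mem hi] at hfin ⊢
    obtain ⟨j, hji, hle⟩ := h i hfin
    have hj : j ∈ S := by
      by_contra hj
      rw [circVec_of_notMem hj, add_top, top_le_iff] at hle
      exact hfin hle
    exact ⟨j, hj, hji, circVec_of_mem hj ▸ hle⟩
  · have hi : i ∈ S := by
      by_contra hi
      exact hfin (by rw [circVec_of_notMem hi, add_top])
    rw [circVec_of_mem hi] at hfin ⊢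
    obtain ⟨j, hj, hji, hle⟩ := h i hi hfin
    exact ⟨j, hji, (circVec_of_mem hj).symm ▸ hle⟩

theorem memL_iff_exists_insert_erase_le {x : Fin n → WithTop ℝ} :
    memL n m p x ↔ ∀ B : Finset (Fin n), B.card = m → ∀ i ∉ B, x i + p B ≠ ⊤ →
      ∃ j ∈ B, x j + p (insert i (B.erase j)) ≤ x i + p B := by
  simp only [memL, tropOrth_circVec_iff]
  constructor
  · intro h B hB i hi hfin
    obtain ⟨j, hj, hji, hle⟩ := h (insert i B) (by rw [card_insert_of_notMem hi, hB]) i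
      (mem_insert_self i B) (by rwa [erase_insert hi])
    rw [erase_insert hi, erase_insert_of_ne hji.symm] at hle
    exact ⟨j, mem_of_mem_insert_of_ne hj hji, hle⟩
  · intro h S hS i hi hfin
    obtain ⟨j, hj, hle⟩ := h (S.erase i) (by rw [card_erase_of_mem hi, hS, Nat.add_sub_cancel]) i
      (notMem_erase i S) hfin
    have hji : j ≠ i := ne_of_mem_erase hj
    rw [← erase_insert_of_ne hji.symm, insert_erase hi] at hle
    exact ⟨j, mem_of_mem_erase hj, hji, hle⟩

end LinearSpace

section Weight

variable {n m : ℕ} {p : Finset (Fin n) → WithTop ℝ} {v : Fin n → ℝ} {A B : Finset (Fin n)}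
  {i j : Fin n}

theorem suppMem.coe_sum_sub_wgt (hB : suppMem n m p B) (v : Fin n → ℝ) :
    ((∑ k ∈ B, v k - wgt n p v B : ℝ) : WithTop ℝ) = p B := by
  obtain ⟨b, hb⟩ := WithTop.ne_top_iff_exists.1 hB.2
  rw [wgt, sub_add_cancel_right, neg_neg, ← hb, WithTop.untopD_coe]

theorem suppMem.insert_erase (hB : suppMem n m p B) (hi : i ∉ B) (hj : j ∈ B)
    (hfin : p (insert i (B.erase j)) ≠ ⊤) : suppMem n m p (insert i (B.erase j)) :=
  ⟨(card_insert_erase hi hj).trans hB.1, hfin⟩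

theorem suppMem.add_insert_erase_le_iff (hB : suppMem n m p B) (hi : i ∉ B) (hj : j ∈ B) :
    (v j : WithTop ℝ) + p (insert i (B.erase j)) ≤ v i + p B ↔
      suppMem n m p (insert i (B.erase j)) ∧
        wgt n p v B ≤ wgt n p v (insert i (B.erase j)) := by
  have le_iff (hB' : suppMem n m p (insert i (B.erase j))) :
      (v j : WithTop ℝ) + p (insert i (B.erase j)) ≤ v i + p B ↔
        wgt n p v B ≤ wgt n p v (insert i (B.erase j)) := by
    rw [← hB.coe_sum_sub_wgt v, ← hB'.coe_sum_sub_wgt v]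
    norm_cast
    have hsum := sum_insert_erase_add v hi hj
    constructor <;> intro <;> linarith
  refine ⟨fun h => ?_, fun ⟨hB', hw⟩ => (le_iff hB').2 hw⟩
  have hfin : p (insert i (B.erase j)) ≠ ⊤ := by
    intro htop
    rw [htop, add_top, top_le_iff] at h
    exact WithTop.add_ne_top.2 ⟨WithTop.coe_ne_top, hB.2⟩ h
  have hB' := hB.insert_erase hi hj hfin
  exact ⟨hB', (le_iff hB').1 h⟩

theorem memL_coe_iff_exists_wgt_le_insert_erase :
    memL n m p (fun i => (v i : WithTop ℝ)) ↔ ∀ B, suppMem n m p B → ∀ i ∉ B, ∃ j ∈ B,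
      suppMem n m p (insert i (B.erase j)) ∧
        wgt n p v B ≤ wgt n p v (insert i (B.erase j)) := by
  rw [memL_iff_exists_insert_erase_le]
  constructor
  · intro h B hB i hi
    obtain ⟨j, hj, hle⟩ := h B hB.1 i hi (WithTop.add_ne_top.2 ⟨WithTop.coe_ne_top, hB.2⟩)
    exact ⟨j, hj, (hB.add_insert_erase_le_iff hi hj).1 hle⟩
  · intro h B hcard i hi hfin
    have hB : suppMem n m p B := ⟨hcard, (WithTop.add_ne_top.1 hfin).2⟩
    obtain ⟨j, hj, hexch⟩ := h B hB i hi
    exact ⟨j, hj, (hB.add_insert_erase_le_iff hi hj).2 hexch⟩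

theorem IsTropPlucker.exists_insert_erase_add_le (hp : IsTropPlucker n m p) (hA : suppMem n m p A)
    (hB : suppMem n m p B) (hiA : i ∈ A) (hiB : i ∉ B) :
    ∃ j ∈ B, j ∉ A ∧ suppMem n m p (insert j (A.erase i)) ∧
      suppMem n m p (insert i (B.erase j)) ∧
      p (insert j (A.erase i)) + p (insert i (B.erase j)) ≤ p A + p B := by
  obtain ⟨j, hj, hji, hle⟩ := hp (A.erase i) (insert i B)
    (by rw [card_erase_of_mem hiA, hA.1]) (by rw [card_insert_of_notMem hiB, hB.1]) i (by simp)
  rw [insert_erase hiA, erase_insert hiB, erase_insert_of_ne hji.symm] at hle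
  have hjB : j ∈ B := mem_of_mem_insert_of_ne (mem_sdiff.1 hj).1 hji
  have hjA : j ∉ A := fun h => (mem_sdiff.1 hj).2 (mem_erase.2 ⟨hji, h⟩)
  have hfin := WithTop.add_ne_top.1
    (ne_top_of_le_ne_top (WithTop.add_ne_top.2 ⟨hA.2, hB.2⟩) hle)
  exact ⟨j, hjB, hjA, hA.insert_erase hjA hiA hfin.1, hB.insert_erase hiB hjB hfin.2, hle⟩

theorem IsTropPlucker.exists_wgt_add_le_insert_erase (hp : IsTropPlucker n m p) (v : Fin n → ℝ)
    (hA : suppMem n m p A) (hB : suppMem n m p B) (hiA : i ∈ A) (hiB : i ∉ B) :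
    ∃ j ∈ B, suppMem n m p (insert j (A.erase i)) ∧ suppMem n m p (insert i (B.erase j)) ∧
      wgt n p v A + wgt n p v B ≤
        wgt n p v (insert j (A.erase i)) + wgt n p v (insert i (B.erase j)) := by
  obtain ⟨j, hjB, hjA, hA', hB', hle⟩ := hp.exists_insert_erase_add_le hA hB hiA hiB
  refine ⟨j, hjB, hA', hB', ?_⟩
  rw [← hA.coe_sum_sub_wgt v, ← hB.coe_sum_sub_wgt v, ← hA'.coe_sum_sub_wgt v,
    ← hB'.coe_sum_sub_wgt v] at hle
  norm_cast at hle
  have hsumA := sum_insert_erase_add v hjA hiA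
  have hsumB := sum_insert_erase_add v hiB hjB
  linarith

theorem exists_suppMem_memSigma (hne : ∃ B, suppMem n m p B) (v : Fin n → ℝ) :
    ∃ B, suppMem n m p B ∧ memSigma n m p B v :=
  Set.exists_max_image {B | suppMem n m p B} (wgt n p v) (Set.toFinite _) hne

theorem exists_mem_memSigma_of_memL (hne : ∃ B, suppMem n m p B)
    (hv : memL n m p (fun i => (v i : WithTop ℝ))) (i : Fin n) :
    ∃ B, suppMem n m p B ∧ i ∈ B ∧ memSigma n m p B v := by
  obtain ⟨B, hB, hmax⟩ := exists_suppMem_memSigma hne v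
  by_cases hi : i ∈ B
  · exact ⟨B, hB, hi, hmax⟩
  obtain ⟨j, -, hB', hle⟩ := memL_coe_iff_exists_wgt_le_insert_erase.1 hv B hB i hi
  exact ⟨_, hB', mem_insert_self i _, fun A hA => (hmax A hA).trans hle⟩

theorem IsTropPlucker.memL_of_forall_exists_mem_memSigma (hp : IsTropPlucker n m p)
    (h : ∀ i, ∃ A, suppMem n m p A ∧ i ∈ A ∧ memSigma n m p A v) :
    memL n m p (fun i => (v i : WithTop ℝ)) := by
  refine memL_coe_iff_exists_wgt_le_insert_erase.2 fun B hB i hiB => ?_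
  obtain ⟨A, hA, hiA, hmax⟩ := h i
  obtain ⟨j, hj, hA', hB', hle⟩ := hp.exists_wgt_add_le_insert_erase v hA hB hiA hiB
  have hA'_le := hmax _ hA'
  exact ⟨j, hj, hB', by linarith⟩

end Weight

/-- A real vector `v` lies in `L(p)` iff the matroid `M_v` of bases of
maximal `v`-weight is loopless, i.e. every `i` lies in some basis of maximal `v`-weight. -/
theorem mem_L_iff_loopless (n m : ℕ) (hm : 1 ≤ m) (hmn : m ≤ n)
    (p : Finset (Fin n) → WithTop ℝ) (hp : IsTropPlucker n m p)
    (hne : ∃ B, suppMem n m p B) (v : Fin n → ℝ) :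
    memL n m p (fun i => (v i : WithTop ℝ)) ↔
      ∀ i : Fin n, ∃ B : Finset (Fin n), suppMem n m p B ∧ i ∈ B ∧
        ∀ A, suppMem n m p A → wgt n p v A ≤ wgt n p v B :=
  ⟨exists_mem_memSigma_of_memL hne, hp.memL_of_forall_exists_mem_memSigma⟩
end

section
/- Let p be a tropical Plücker vector of rank m on {1,…,n}, let B ∈ supp(p), and assume that for every i ∉ B there exists b ∈ B with (B∪{i})∖{b} ∈ supp(p). Then for every x ∈ ℝ^B the vector f_B(x) lies in Σ_B; that is, w_p(f_B(x), A) ≤ w_p(f_B(x), B) for every A ∈ supp(p). -/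
open Finset

/-!
If the `v`-weight of `B` cannot be increased by exchanging a single element, it is maximal among all
bases: for a basis `A ≠ B`, the tropical Plücker relation exchanges some `i ∈ A \ B` for some
`j ∈ B \ A` simultaneously in both bases without decreasing the sum of the two weights. By local
maximality the neighbour of `B` weighs at most as much as `B`, so the new `A`, which is closer to
`B`, weighs at least as much as the old one. The entry of `f_B(x)` at `i ∉ B`, being a minimum over
`b ∈ B`, is small enough that no exchange of some `b` for `i` increases the weight of `B`.
-/

lemma insert_erase_sdiff {α : Type*} [DecidableEq α] {A B : Finset α} {i j : α} (hj : j ∈ B) :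
    insert j (A.erase i) \ B = (A \ B).erase i := by
  rw [insert_sdiff_of_mem _ hj, erase_sdiff_comm]

lemma sum_insert_erase_add_sum_erase_insert {α M : Type*} [DecidableEq α] [AddCommMonoid M]
    {A B : Finset α} {i j : α} (v : α → M) (hi : i ∈ A \ B) (hj : j ∈ B \ A) :
    ∑ k ∈ insert j (A.erase i), v k + ∑ k ∈ (insert i B).erase j, v k =
      ∑ k ∈ A, v k + ∑ k ∈ B, v k := by
  obtain ⟨hiA, hiB⟩ := mem_sdiff.1 hi
  obtain ⟨hjB, hjA⟩ := mem_sdiff.1 hj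
  have hjA' : j ∉ A.erase i := fun h => hjA (mem_of_mem_erase h)
  calc ∑ k ∈ insert j (A.erase i), v k + ∑ k ∈ (insert i B).erase j, v k
      = ∑ k ∈ A.erase i, v k + (v j + ∑ k ∈ (insert i B).erase j, v k) := by
        rw [sum_insert hjA', add_comm (v j), add_assoc]
    _ = ∑ k ∈ A.erase i, v k + (v i + ∑ k ∈ B, v k) := by
        rw [add_sum_erase _ v (mem_insert_of_mem hjB), sum_insert hiB]
    _ = ∑ k ∈ A, v k + ∑ k ∈ B, v k := by rw [← add_assoc, sum_erase_add _ v hiA]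

section

variable {n m : ℕ} {p : Finset (Fin n) → WithTop ℝ} {A B : Finset (Fin n)} {i j : Fin n}

theorem IsTropPlucker.exists_exchange (hp : IsTropPlucker n m p) (hA : suppMem n m p A)
    (hB : suppMem n m p B) (hi : i ∈ A \ B) :
    ∃ j ∈ B \ A, suppMem n m p (insert j (A.erase i)) ∧ suppMem n m p ((insert i B).erase j) ∧
      p (insert j (A.erase i)) + p ((insert i B).erase j) ≤ p A + p B := by
  obtain ⟨hiA, hiB⟩ := mem_sdiff.1 hi
  have hcardA : #(A.erase i) = m - 1 := by rw [card_erase_of_mem hiA, hA.1]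
  have hcardB : #(insert i B) = m + 1 := by rw [card_insert_of_notMem hiB, hB.1]
  obtain ⟨j, hj, hji, hle⟩ := hp (A.erase i) (insert i B) hcardA hcardB i (by simp)
  rw [insert_erase hiA, erase_insert hiB] at hle
  obtain ⟨hjB, hjA⟩ := mem_sdiff.1 hj
  have hfin := WithTop.add_ne_top.1 (ne_top_of_le_ne_top (WithTop.add_ne_top.2 ⟨hA.2, hB.2⟩) hle)
  refine ⟨j, ?_, ⟨?_, hfin.1⟩, ⟨?_, hfin.2⟩, hle⟩
  · exact mem_sdiff.2 ⟨mem_of_mem_insert_of_ne hjB hji, fun h => hjA (mem_erase.2 ⟨hji, h⟩)⟩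
  · rw [card_insert_of_notMem hjA, card_erase_add_one hiA, hA.1]
  · rw [card_erase_of_mem hjB, hcardB, Nat.add_sub_cancel]

theorem IsTropPlucker.exists_exchange_wgt_add_le (hp : IsTropPlucker n m p) (v : Fin n → ℝ)
    (hA : suppMem n m p A) (hB : suppMem n m p B) (hi : i ∈ A \ B) :
    ∃ j ∈ B \ A, suppMem n m p (insert j (A.erase i)) ∧ suppMem n m p ((insert i B).erase j) ∧
      wgt n p v A + wgt n p v B ≤
        wgt n p v (insert j (A.erase i)) + wgt n p v ((insert i B).erase j) := by
  obtain ⟨j, hj, hA', hB', hle⟩ := hp.exists_exchange hA hB hi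
  refine ⟨j, hj, hA', hB', ?_⟩
  have hsum := sum_insert_erase_add_sum_erase_insert v hi hj
  have hle' : (p (insert j (A.erase i))).untopD 0 + (p ((insert i B).erase j)).untopD 0 ≤
      (p A).untopD 0 + (p B).untopD 0 := by
    rw [← WithTop.untopD_add hA'.2 hB'.2, ← WithTop.untopD_add hA.2 hB.2]
    exact WithTop.untopD_mono (WithTop.add_ne_top.2 ⟨hA.2, hB.2⟩) hle
  simp only [wgt]
  linarith

theorem IsTropPlucker.memSigma_of_forall_exchange (hp : IsTropPlucker n m p)
    (hB : suppMem n m p B) {v : Fin n → ℝ}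
    (hloc : ∀ i ∉ B, ∀ j ∈ B, suppMem n m p ((insert i B).erase j) →
      wgt n p v ((insert i B).erase j) ≤ wgt n p v B) :
    memSigma n m p B v := by
  intro A hA
  induction hk : #(A \ B) generalizing A with
  | zero =>
    have hAB : A ⊆ B := sdiff_eq_empty_iff_subset.1 (card_eq_zero.1 hk)
    rw [eq_of_subset_of_card_le hAB (hB.1.trans hA.1.symm).le]
  | succ k ih =>
    obtain ⟨i, hi⟩ : (A \ B).Nonempty := card_pos.1 (hk ▸ k.succ_pos)
    obtain ⟨j, hj, hA', hB', hle⟩ := hp.exists_exchange_wgt_add_le v hA hB hi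
    have hjB : j ∈ B := (mem_sdiff.1 hj).1
    have hcloser : #(insert j (A.erase i) \ B) = k := by
      rw [insert_erase_sdiff hjB, card_erase_of_mem hi, hk, Nat.add_sub_cancel]
    have hwA' := ih _ hA' hcloser
    have hwB' := hloc i (mem_sdiff.1 hi).2 j hjB hB'
    linarith

lemma wgt_exchange_le_iff (v : Fin n → ℝ) (hi : i ∉ B) (hj : j ∈ B) :
    wgt n p v ((insert i B).erase j) ≤ wgt n p v B ↔
      v i ≤ v j + (p ((insert i B).erase j)).untopD 0 - (p B).untopD 0 := by
  have hsum := add_sum_erase (insert i B) v (mem_insert_of_mem hj)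
  rw [sum_insert hi] at hsum
  simp only [wgt]
  constructor <;> intro h <;> linarith

lemma fB_apply_le (x : {i : Fin n // i ∈ B} → ℝ) (hi : i ∉ B) (hj : j ∈ B)
    (hij : p ((insert i B).erase j) ≠ ⊤) :
    fB n p B x i ≤ fB n p B x j + (p ((insert i B).erase j)).untopD 0 - (p B).untopD 0 := by
  simp only [fB, dif_neg hi, dif_pos hj]
  gcongr
  calc (B.attach.inf fun b => (x b : WithTop ℝ) + p ((insert i B).erase b.1)).untopD 0
      ≤ ((x ⟨j, hj⟩ : WithTop ℝ) + p ((insert i B).erase j)).untopD 0 :=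
        WithTop.untopD_mono (WithTop.add_ne_top.2 ⟨WithTop.coe_ne_top, hij⟩)
          (inf_le (mem_attach B ⟨j, hj⟩))
    _ = x ⟨j, hj⟩ + (p ((insert i B).erase j)).untopD 0 :=
        WithTop.untopD_add WithTop.coe_ne_top hij

/- At a loop `i` of the matroid the infimum in `fB` is `⊤` and `fB n p B x i` is a junk value, but
no basis contains `i`, so this value enters no weight. -/
theorem fB_mem_Sigma_general (hp : IsTropPlucker n m p) (hB : suppMem n m p B)
    (x : {i : Fin n // i ∈ B} → ℝ) : memSigma n m p B (fB n p B x) :=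
  hp.memSigma_of_forall_exchange hB fun _ hi _ hj hij =>
    (wgt_exchange_le_iff _ hi hj).2 (fB_apply_le x hi hj hij.2)

end

/-- The image of `f_B` lies in `Σ_B`: the basis `B` has maximal
`f_B(x)`-weight among all bases of the underlying matroid. -/
theorem fB_mem_Sigma (n m : ℕ) (hm : 1 ≤ m) (hmn : m ≤ n)
    (p : Finset (Fin n) → WithTop ℝ) (hp : IsTropPlucker n m p)
    (B : Finset (Fin n)) (hB : suppMem n m p B)
    (hcov : ∀ i : Fin n, i ∉ B → ∃ b ∈ B, suppMem n m p ((insert i B).erase b)) :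
    ∀ x : {i : Fin n // i ∈ B} → ℝ, memSigma n m p B (fB n p B x) := by
  exact fB_mem_Sigma_general hp hB
end

section
/- Let p be a tropical Plücker vector of rank m on {1,…,n}, let B ∈ supp(p), and assume that for every i ∉ B there exists b ∈ B with (B∪{i})∖{b} ∈ supp(p). Then for every x ∈ ℝ^B the vector f_B(x) lies in the tropical linear space L(p); that is, f_B(x) is tropically orthogonal to c_S for every (m+1)-element subset S of {1,…,n}. -/
open Finset

/-!
For `b ∈ B` the Plücker relations for `R = B \ b` say that the cocircuit vector
`i ↦ p_{R ∪ i}` lies in `L(p)`. A tropical linear space is closed under adding a constant and under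
coordinatewise minima, and `f_B(x)` is, up to the constant `p_B`, the minimum over `b ∈ B` of the
cocircuit vectors of `B \ b` shifted by `x_b`.
-/

/-- The vector `i ↦ p_{R ∪ {i}}` of a set `R` of size `m - 1`, with `∞` on `R` itself. For `p` of
rank `m` it is the valuated cocircuit vector of `R`, dual to `circVec`. -/
def cocircVec (n : ℕ) (p : Finset (Fin n) → WithTop ℝ) (R : Finset (Fin n)) :
    Fin n → WithTop ℝ := fun i => if i ∈ R then ⊤ else p (insert i R)

/-- The extension of `f_B` to a map `𝕋^B → 𝕋ⁿ`. The minimum over the exchanges is allowed to be `∞`,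
so an element `i ∉ B` that cannot be exchanged into `B` gets the value `∞`; only the case
`p B ≠ ⊤` is meaningful. -/
noncomputable def tropFB (n : ℕ) (p : Finset (Fin n) → WithTop ℝ) (B : Finset (Fin n))
    (x : {i : Fin n // i ∈ B} → WithTop ℝ) : Fin n → WithTop ℝ := fun i =>
  if h : i ∈ B then x ⟨i, h⟩
  else (B.attach.inf fun b => x b + p ((insert i B).erase b.1)) - p B

section TropOrth

variable {n : ℕ} {x y : Fin n → WithTop ℝ}

theorem tropOrth_iff_forall_exists_ne_le :
    TropOrth n x y ↔ ∀ i, x i + y i ≠ ⊤ → ∃ j, j ≠ i ∧ x j + y j ≤ x i + y i := by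
  constructor
  · rintro (htop | ⟨i, j, hij, heq, hmin⟩) k hk
    · exact absurd (htop k) hk
    · by_cases hki : i = k
      · exact ⟨j, hki ▸ hij.symm, heq ▸ hmin k⟩
      · exact ⟨i, hki, hmin k⟩
  · intro h
    by_cases! htop : ∀ i, x i + y i = ⊤
    · exact .inl htop
    obtain ⟨k, hk⟩ := htop
    obtain ⟨i, -, hmin⟩ := univ.exists_min_image (fun i => x i + y i) ⟨k, mem_univ k⟩
    obtain ⟨j, hji, hle⟩ := h i (ne_top_of_le_ne_top hk (hmin k (mem_univ k)))
    exact .inr ⟨i, j, hji.symm, (hmin j (mem_univ j)).antisymm hle, fun k => hmin k (mem_univ k)⟩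

theorem TropOrth.const_add (h : TropOrth n x y) (c : WithTop ℝ) :
    TropOrth n (fun i => c + x i) y := by
  rw [tropOrth_iff_forall_exists_ne_le] at h ⊢
  intro i hi
  rw [add_assoc] at hi
  obtain ⟨j, hji, hle⟩ := h i (WithTop.add_ne_top.1 hi).2
  refine ⟨j, hji, ?_⟩
  simp only [add_assoc]
  gcongr

theorem TropOrth.finset_inf {ι : Type*} {s : Finset ι} {f : ι → Fin n → WithTop ℝ}
    (h : ∀ b ∈ s, TropOrth n (f b) y) : TropOrth n (fun i => s.inf fun b => f b i) y := by
  rw [tropOrth_iff_forall_exists_ne_le]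
  intro i hi
  have hs : s.Nonempty := by
    rw [nonempty_iff_ne_empty]
    rintro rfl
    simp at hi
  obtain ⟨b, hb, hinf⟩ := s.exists_mem_eq_inf hs fun b => f b i
  rw [hinf] at hi ⊢
  obtain ⟨j, hji, hle⟩ := tropOrth_iff_forall_exists_ne_le.1 (h b hb) i hi
  exact ⟨j, hji, (add_le_add_left (inf_le hb) _).trans hle⟩

end TropOrth

section Plucker

variable {n m : ℕ} {p : Finset (Fin n) → WithTop ℝ} {B R : Finset (Fin n)}

theorem IsTropPlucker.memL_cocircVec (hp : IsTropPlucker n m p) (hR : R.card = m - 1) :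
    memL n m p (cocircVec n p R) := by
  intro S hS
  rw [tropOrth_iff_forall_exists_ne_le]
  intro i hi
  have hiR : i ∉ R := fun h => by simp [cocircVec, h] at hi
  have hiS : i ∈ S := by
    by_contra h
    simp [circVec, h] at hi
  obtain ⟨j, hj, hji, hle⟩ := hp R S hR hS i (mem_sdiff.2 ⟨hiS, hiR⟩)
  rw [mem_sdiff] at hj
  exact ⟨j, hji, by simpa only [cocircVec, circVec, hiR, hiS, hj, if_true, if_false] using hle⟩

theorem inf_add_cocircVec_erase_of_mem (x : {i : Fin n // i ∈ B} → WithTop ℝ) {i : Fin n}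
    (hi : i ∈ B) :
    (B.attach.inf fun b => x b + cocircVec n p (B.erase b.1) i) = x ⟨i, hi⟩ + p B := by
  refine le_antisymm ?_ (Finset.le_inf fun b _ => ?_)
  · simpa [cocircVec, insert_erase hi] using
      inf_le (f := fun b => x b + cocircVec n p (B.erase b.1) i) (mem_attach B ⟨i, hi⟩)
  · by_cases hib : i = b.1
    · subst hib
      simp [cocircVec, insert_erase hi]
    · simp [cocircVec, hib, hi]

theorem cocircVec_erase_of_notMem {i b : Fin n} (hi : i ∉ B) (hb : b ∈ B) :
    cocircVec n p (B.erase b) i = p ((insert i B).erase b) := by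
  rw [cocircVec, if_neg (mt mem_of_mem_erase hi),
    erase_insert_of_ne (ne_of_mem_of_not_mem hb hi).symm]

theorem tropFB_eq_neg_add_inf_cocircVec (hB : p B ≠ ⊤) (x : {i : Fin n // i ∈ B} → WithTop ℝ) :
    tropFB n p B x =
      fun i => -p B + B.attach.inf fun b => x b + cocircVec n p (B.erase b.1) i := by
  funext i
  by_cases hi : i ∈ B
  · rw [inf_add_cocircVec_erase_of_mem x hi, tropFB, dif_pos hi, add_left_comm, add_comm (-p B),
      LinearOrderedAddCommGroupWithTop.add_neg_cancel_of_ne_top hB, add_zero]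
  · simp only [tropFB, dif_neg hi, cocircVec_erase_of_notMem hi (Subtype.prop _)]
    rw [sub_eq_add_neg, add_comm]

theorem coe_fB_eq_tropFB (hB : p B ≠ ⊤)
    (hcov : ∀ i ∉ B, ∃ b ∈ B, p ((insert i B).erase b) ≠ ⊤) (x : {i : Fin n // i ∈ B} → ℝ) :
    (fun i => (fB n p B x i : WithTop ℝ)) = tropFB n p B fun b => x b := by
  funext i
  by_cases hi : i ∈ B
  · simp only [fB, tropFB, dif_pos hi]
  · obtain ⟨b, hb, hbtop⟩ := hcov i hi
    have hinf : (B.attach.inf fun b => (x b : WithTop ℝ) + p ((insert i B).erase b.1)) ≠ ⊤ :=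
      fun h => WithTop.add_ne_top.2 ⟨WithTop.coe_ne_top, hbtop⟩
        ((Finset.inf_eq_top_iff _ _).1 h ⟨b, hb⟩ (mem_attach B _))
    simp only [fB, tropFB, dif_neg hi]
    obtain ⟨q, hq⟩ := WithTop.ne_top_iff_exists.1 hB
    obtain ⟨r, hr⟩ := WithTop.ne_top_iff_exists.1 hinf
    rw [← hr, ← hq, WithTop.untopD_coe, WithTop.untopD_coe,
      WithTop.LinearOrderedAddCommGroup.coe_sub]

theorem fB_mem_L_general (hp : IsTropPlucker n m p) (hB : suppMem n m p B)
    (x : {i : Fin n // i ∈ B} → WithTop ℝ) : memL n m p (tropFB n p B x) := by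
  intro S hS
  rw [tropFB_eq_neg_add_inf_cocircVec hB.2]
  refine .const_add (.finset_inf fun b _ => ?_) _
  have hcard : (B.erase b.1).card = m - 1 := by rw [card_erase_of_mem b.2, hB.1]
  exact (hp.memL_cocircVec hcard S hS).const_add (x b)

end Plucker

/-- The image of `f_B` lies in the tropical linear space `L(p)`. -/
theorem fB_mem_L (n m : ℕ) (hm : 1 ≤ m) (hmn : m ≤ n)
    (p : Finset (Fin n) → WithTop ℝ) (hp : IsTropPlucker n m p)
    (B : Finset (Fin n)) (hB : suppMem n m p B)
    (hcov : ∀ i : Fin n, i ∉ B → ∃ b ∈ B, suppMem n m p ((insert i B).erase b)) :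
    ∀ x : {i : Fin n // i ∈ B} → ℝ, memL n m p (fun i => ((fB n p B x i : ℝ) : WithTop ℝ)) := by
  intro x
  rw [coe_fB_eq_tropFB hB.2 fun i hi => (hcov i hi).imp fun _ h => ⟨h.1, h.2.2⟩]
  exact fB_mem_L_general hp hB _
end

section
/- Let p be a tropical Plücker vector of rank m on {1,…,n}, let B ∈ supp(p), and let v ∈ L(p)_B. Then for every i ∈ {1,…,n}∖B one has p_B + v_i = min{ p_{(B∪{i})∖{b}} + v_b : b ∈ B }, where the minimum is taken in 𝕋 (terms with (B∪{i})∖{b} ∉ supp(p) are ∞); in particular this minimum is a real number. Consequently v is determined by its coordinates indexed by B, i.e., f_B is surjective onto L(p)_B whenever f_B is defined. -/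
open Finset

/-!
Both conditions defining `L(p)_B` are read off at the fundamental circuit `B ∪ {i}`. Since `B` is a
basis of maximal `v`-weight, exchanging `b ∈ B` for `i` cannot increase the weight, which says
`p_B + v_i ≤ p_{(B ∪ i) ∖ b} + v_b` after cancelling the coordinates shared by the two bases. In the
other direction, the term of `c_{B ∪ i}` at `i` is the finite number `p_B + v_i`, so tropical
orthogonality provides a second index whose term is at most this one, and that index lies in `B`.
Solving the resulting formula for `v_i` gives `v = f_B(v|_B)`.
-/

section LocalTropicalLinearSpace

variable {n m : ℕ} {p : Finset (Fin n) → WithTop ℝ} {B : Finset (Fin n)} {v : Fin n → ℝ}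

theorem TropOrth.exists_ne_add_le {x y : Fin n → WithTop ℝ} (h : TropOrth n x y) {i : Fin n}
    (hi : x i + y i ≠ ⊤) : ∃ j ≠ i, x j + y j ≤ x i + y i := by
  rcases h with htop | ⟨j, k, hjk, heq, hmin⟩
  · exact absurd (htop i) hi
  · by_cases hj : j = i
    · exact ⟨k, fun hk => hjk (hj.trans hk.symm), heq ▸ hmin i⟩
    · exact ⟨j, hj, hmin i⟩

theorem memSigma.add_sum_le (hv : memSigma n m p B v) (hB : p B ≠ ⊤) {A : Finset (Fin n)}
    (hA : A.card = m) : p B + ↑(∑ i ∈ A, v i) ≤ p A + ↑(∑ i ∈ B, v i) := by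
  by_cases hpA : p A = ⊤
  · rw [hpA, top_add]
    exact le_top
  have hwgt := hv A ⟨hA, hpA⟩
  unfold wgt at hwgt
  lift p A to ℝ using hpA with a
  lift p B to ℝ using hB with b
  simp only [WithTop.untopD_coe] at hwgt
  norm_cast
  linarith

theorem memSigma.add_le_exchange (hv : memSigma n m p B v) (hB : suppMem n m p B) {i b : Fin n}
    (hi : i ∉ B) (hb : b ∈ B) : p B + v i ≤ p ((insert i B).erase b) + v b := by
  have hb' : b ∈ insert i B := mem_insert_of_mem hb
  have hcard : ((insert i B).erase b).card = m := by
    rw [card_erase_of_mem hb', card_insert_of_notMem hi, Nat.add_sub_cancel, hB.1]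
  have hsum : ∑ j ∈ (insert i B).erase b, v j + v b = v i + ∑ j ∈ B, v j := by
    rw [sum_erase_add _ _ hb', sum_insert hi]
  refine (WithTop.add_le_add_iff_right (WithTop.coe_ne_top (a := ∑ j ∈ B, v j))).mp ?_
  calc p B + v i + ↑(∑ j ∈ B, v j)
      = p B + ↑(∑ j ∈ (insert i B).erase b, v j) + v b := by
        rw [add_assoc, add_assoc, ← WithTop.coe_add, ← WithTop.coe_add, hsum]
    _ ≤ p ((insert i B).erase b) + ↑(∑ j ∈ B, v j) + v b :=
        add_le_add_left (hv.add_sum_le hB.2 hcard) _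
    _ = p ((insert i B).erase b) + v b + ↑(∑ j ∈ B, v j) := add_right_comm _ _ _

theorem memL.exists_exchange_le {x : Fin n → WithTop ℝ} (hx : memL n m p x) (hB : B.card = m)
    {i : Fin n} (hi : i ∉ B) (hfin : p B + x i ≠ ⊤) :
    ∃ b ∈ B, p ((insert i B).erase b) + x b ≤ p B + x i := by
  have hci : x i + circVec n p (insert i B) i = p B + x i := by
    rw [circVec, if_pos (mem_insert_self i B), erase_insert hi, add_comm]
  obtain ⟨b, hbi, hle⟩ :=
    (hx (insert i B) (by rw [card_insert_of_notMem hi, hB])).exists_ne_add_le (hci ▸ hfin)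
  rw [hci] at hle
  have hb : b ∈ insert i B := by
    by_contra hb
    rw [circVec, if_neg hb, add_top] at hle
    exact hfin (top_le_iff.mp hle)
  refine ⟨b, mem_of_mem_insert_of_ne hb hbi, ?_⟩
  rwa [circVec, if_pos hb, add_comm] at hle

theorem memLocal.inf_exchange_eq (hv : memLocal n m p B v) (hB : suppMem n m p B) {i : Fin n}
    (hi : i ∉ B) : B.inf (fun b => p ((insert i B).erase b) + (v b : WithTop ℝ)) = p B + v i := by
  apply le_antisymm
  · obtain ⟨b, hb, hle⟩ :=
      hv.2.exists_exchange_le hB.1 hi (WithTop.add_ne_top.mpr ⟨hB.2, WithTop.coe_ne_top⟩)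
    exact (Finset.inf_le hb).trans hle
  · exact Finset.le_inf fun b hb => hv.1.add_le_exchange hB hi hb

theorem memLocal.fB_restrict_eq (hv : memLocal n m p B v) (hB : suppMem n m p B) :
    fB n p B (fun b => v b) = v := by
  funext i
  by_cases hi : i ∈ B
  · rw [fB, dif_pos hi]
  have hinf : B.attach.inf (fun b => (v b : WithTop ℝ) + p ((insert i B).erase b)) = p B + v i := by
    rw [inf_attach B fun b => (v b : WithTop ℝ) + p ((insert i B).erase b),
      ← hv.inf_exchange_eq hB hi]
    simp only [add_comm]
  rw [fB, dif_neg hi, hinf]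
  lift p B to ℝ using hB.2 with a
  rw [← WithTop.coe_add, WithTop.untopD_coe, WithTop.untopD_coe, add_sub_cancel_left]

theorem memLocal.eq_of_forall_mem_eq {w : Fin n → ℝ} (hw : memLocal n m p B w)
    (hv : memLocal n m p B v) (hB : suppMem n m p B) (h : ∀ b ∈ B, w b = v b) : w = v := by
  have hrestrict : (fun b : B => w b) = fun b : B => v b := funext fun b => h b b.2
  calc w = fB n p B (fun b => w b) := (hw.fB_restrict_eq hB).symm
    _ = fB n p B (fun b => v b) := by rw [hrestrict]
    _ = v := hv.fB_restrict_eq hB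

theorem local_min_formula_general (hB : suppMem n m p B) (hv : memLocal n m p B v) :
    (∀ i : Fin n, i ∉ B →
      B.inf (fun b => p ((insert i B).erase b) + (v b : WithTop ℝ))
        = p B + (v i : WithTop ℝ)) ∧
    (∀ w : Fin n → ℝ, memLocal n m p B w → (∀ b ∈ B, w b = v b) → w = v) :=
  ⟨fun _ hi => hv.inf_exchange_eq hB hi, fun _ hw h => hw.eq_of_forall_mem_eq hv hB h⟩

end LocalTropicalLinearSpace

/-- For `v ∈ L(p)_B` and `i ∉ B`, one has
`p_B + v_i = min_{b ∈ B} (p_{(B ∪ i) ∖ b} + v_b)` in `𝕋`; consequently a vector of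
`L(p)_B` is determined by its coordinates indexed by `B`. -/
theorem local_min_formula (n m : ℕ) (hm : 1 ≤ m) (hmn : m ≤ n)
    (p : Finset (Fin n) → WithTop ℝ) (hp : IsTropPlucker n m p)
    (B : Finset (Fin n)) (hB : suppMem n m p B)
    (v : Fin n → ℝ) (hv : memLocal n m p B v) :
    (∀ i : Fin n, i ∉ B →
      B.inf (fun b => p ((insert i B).erase b) + (v b : WithTop ℝ))
        = p B + (v i : WithTop ℝ)) ∧
    (∀ w : Fin n → ℝ, memLocal n m p B w → (∀ b ∈ B, w b = v b) → w = v) :=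
  local_min_formula_general hB hv
end

section
/- Let B be an m-element subset of {1,…,n} and let V : B × ({1,…,n}∖B) → 𝕋 be any matrix. Then the vector τ_V of tropical maximal minors of the augmented matrix V̄, defined on m-element subsets A of {1,…,n} by τ_V(A) = min over bijections σ : B → A of Σ_{i∈B} V̄(i, σ(i)), is a tropical Plücker vector of rank m on {1,…,n}. -/
open Finset

/-!
Choose optimal bijections `f` from the rows to `S ∪ {i}` and `g` from the rows to `T ∖ {i}`. Sending
`f b` to `g b` is an injective partial map on columns, and `i` is not one of its values, so the
path `i = f b₁ ↦ g b₁ = f b₂ ↦ ⋯` never repeats and ends at a column `j` outside `S ∪ {i}`.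
Exchanging `f` and `g` on the rows along this path gives bijections onto `S ∪ {j}` and `T ∖ {j}`
without changing the total weight of the pair.
-/

section Exchange

variable {ι β : Type*} [Fintype ι] [DecidableEq β]

lemma exists_insert_image_eq_insert_image (f : ι → β) {g : ι → β}
    (hg : g.Injective) {i : β} (hi : i ∉ univ.image g) :
    ∃ Q : Finset ι, ∃ j ∉ univ.image f, insert j (Q.image f) = insert i (Q.image g) := by
  classical
  -- `Q` stands for the rows along a path from `i` to `j`. A maximal `Q` has `j` outside the range
  -- of `f`, because the path could otherwise be prolonged by one row.
  obtain ⟨Q, ⟨j, hQ⟩, hQ_max⟩ :=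
    (Set.toFinite {Q : Finset ι | ∃ j, insert j (Q.image f) = insert i (Q.image g)}).exists_maximal
      ⟨∅, i, by simp⟩
  refine ⟨Q, j, fun hj ↦ ?_, hQ⟩
  obtain ⟨b, -, rfl⟩ := mem_image.1 hj
  have hiQ : i ∉ Q.image g := fun h ↦ hi (image_subset_image (subset_univ Q) h)
  have hbQ : b ∉ Q := fun hb ↦ by
    have hcard := congrArg card hQ
    rw [insert_eq_of_mem (mem_image_of_mem f hb), card_insert_of_notMem hiQ,
      card_image_of_injective Q hg] at hcard
    have := card_image_le (s := Q) (f := f)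
    lia
  have h_longer : insert (g b) ((insert b Q).image f) = insert i ((insert b Q).image g) := by
    rw [image_insert, image_insert, hQ, insert_comm]
  exact hbQ (hQ_max ⟨g b, h_longer⟩ (subset_insert b Q) (mem_insert_self b Q))

lemma image_piecewise_eq_erase_insert [DecidableEq ι] {f g : ι → β} (hf : f.Injective)
    {Q : Finset ι} {i j : β} (hij : i ≠ j) (hi : i ∉ Q.image g)
    (hQ : insert j (Q.image f) = insert i (Q.image g)) :
    univ.image (Q.piecewise g f) = (insert j (univ.image f)).erase i := by
  have hgQ : Q.image g = (insert j (Q.image f)).erase i := by rw [hQ, erase_insert hi]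
  have hiQ : i ∈ Q.image f :=
    mem_of_mem_insert_of_ne (hQ ▸ mem_insert_self i (Q.image g)) hij
  have hiQc : i ∉ Qᶜ.image f :=
    disjoint_left.1 ((disjoint_image hf).2 disjoint_compl_right) hiQ
  calc univ.image (Q.piecewise g f)
      = Q.image (Q.piecewise g f) ∪ Qᶜ.image (Q.piecewise g f) := by
        rw [← image_union, union_compl]
    _ = Q.image g ∪ Qᶜ.image f := by
        congr 1 <;> refine image_congr fun b hb ↦ ?_
        · exact piecewise_eq_of_mem _ _ _ hb
        · exact piecewise_eq_of_notMem _ _ _ (mem_compl.1 hb)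
    _ = (insert j (Q.image f)).erase i ∪ (Qᶜ.image f).erase i := by
        rw [hgQ, erase_eq_of_notMem hiQc]
    _ = (insert j (univ.image f)).erase i := by
        rw [← erase_union_distrib, insert_union, ← image_union, union_compl]

lemma exists_image_piecewise_eq_erase_insert [DecidableEq ι] {f g : ι → β} (hf : f.Injective)
    (hg : g.Injective) {i : β} (hif : i ∈ univ.image f) (hig : i ∉ univ.image g) :
    ∃ Q : Finset ι, ∃ j ∈ univ.image g, j ∉ univ.image f ∧
      univ.image (Q.piecewise g f) = (insert j (univ.image f)).erase i ∧
      univ.image (Q.piecewise f g) = (insert i (univ.image g)).erase j := by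
  obtain ⟨Q, j, hjf, hQ⟩ := exists_insert_image_eq_insert_image f hg hig
  have hij : i ≠ j := ne_of_mem_of_not_mem hif hjf
  have hiQ : i ∉ Q.image g := fun h ↦ hig (image_subset_image (subset_univ Q) h)
  have hjQ : j ∉ Q.image f := fun h ↦ hjf (image_subset_image (subset_univ Q) h)
  have hjg : j ∈ Q.image g := mem_of_mem_insert_of_ne (hQ ▸ mem_insert_self j (Q.image f)) hij.symm
  exact ⟨Q, j, image_subset_image (subset_univ Q) hjg, hjf,
    image_piecewise_eq_erase_insert hf hij hiQ hQ,
    image_piecewise_eq_erase_insert hg hij.symm hjQ hQ.symm⟩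

end Exchange

section TropMinor

variable {ι β R : Type*} [Fintype ι] [DecidableEq ι] [DecidableEq β]
  [AddCommMonoid R] [LinearOrder R] [OrderTop R]

/-- The tropical determinant of the submatrix of `M` with columns `A`. It is `⊤` when `A` does not
have as many elements as there are rows. -/
def tropMinor (M : ι → β → R) (A : Finset β) : R :=
  univ.inf fun σ : ι ≃ {j // j ∈ A} ↦ ∑ b, M b (σ b)

lemma tropMinor_le_sum (M : ι → β → R) {A : Finset β} (hA : #A = Fintype.card ι) {f : ι → β}
    (hf : univ.image f = A) : tropMinor M A ≤ ∑ b, M b (f b) := by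
  subst hf
  have hf : f.Injective := by
    rwa [← card_univ, card_image_iff, coe_univ, Set.injOn_univ] at hA
  have hσ : Function.Bijective fun b ↦ (⟨f b, mem_image_of_mem f (mem_univ b)⟩ :
      {j // j ∈ univ.image f}) :=
    ⟨fun b c h ↦ hf (congrArg Subtype.val h), by rintro ⟨_, h⟩; simpa using h⟩
  exact inf_le (mem_univ (Equiv.ofBijective _ hσ))

lemma exists_tropMinor_eq_sum (M : ι → β → R) {A : Finset β} (hA : #A = Fintype.card ι) :
    ∃ f : ι → β, f.Injective ∧ univ.image f = A ∧ tropMinor M A = ∑ b, M b (f b) := by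
  have : Nonempty (ι ≃ {j // j ∈ A}) := ⟨Fintype.equivOfCardEq (by simp [hA])⟩
  obtain ⟨σ, -, hσ⟩ := exists_mem_eq_inf univ univ_nonempty
    fun σ : ι ≃ {j // j ∈ A} ↦ ∑ b, M b (σ b)
  refine ⟨fun b ↦ σ b, Subtype.val_injective.comp σ.injective, ?_, hσ⟩
  ext x
  simp only [mem_image, mem_univ, true_and]
  exact ⟨fun ⟨b, hb⟩ ↦ hb ▸ (σ b).2, fun hx ↦ ⟨σ.symm ⟨x, hx⟩, by simp⟩⟩

theorem tauV_isTropPlucker_general [IsOrderedAddMonoid R] (M : ι → β → R) {S T : Finset β}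
    (hS : #S + 1 = Fintype.card ι) (hT : #T = Fintype.card ι + 1) {i : β} (hi : i ∈ T \ S) :
    ∃ j ∈ T \ S, j ≠ i ∧
      tropMinor M (insert j S) + tropMinor M (T.erase j) ≤
        tropMinor M (insert i S) + tropMinor M (T.erase i) := by
  obtain ⟨hiT, hiS⟩ := mem_sdiff.1 hi
  have card_insert_S {x : β} (hx : x ∉ S) : #(insert x S) = Fintype.card ι := by
    rw [card_insert_of_notMem hx, hS]
  have card_erase_T {x : β} (hx : x ∈ T) : #(T.erase x) = Fintype.card ι := by
    rw [card_erase_of_mem hx, hT, Nat.add_sub_cancel]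
  obtain ⟨f, hf, hfS, hf_sum⟩ := exists_tropMinor_eq_sum M (card_insert_S hiS)
  obtain ⟨g, hg, hgT, hg_sum⟩ := exists_tropMinor_eq_sum M (card_erase_T hiT)
  obtain ⟨Q, j, hjg, hjf, h_image_S, h_image_T⟩ := exists_image_piecewise_eq_erase_insert hf hg
    (hfS ▸ mem_insert_self i S) (hgT ▸ notMem_erase i T)
  have ⟨hji, hjS⟩ : j ≠ i ∧ j ∉ S := by simpa [hfS] using hjf
  have hjT : j ∈ T := mem_of_mem_erase (hgT ▸ hjg)
  rw [hfS, insert_comm, erase_insert (by simp [hji.symm, hiS])] at h_image_S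
  rw [hgT, insert_erase hiT] at h_image_T
  refine ⟨j, mem_sdiff.2 ⟨hjT, hjS⟩, hji, ?_⟩
  calc tropMinor M (insert j S) + tropMinor M (T.erase j)
      ≤ ∑ b, M b (Q.piecewise g f b) + ∑ b, M b (Q.piecewise f g b) :=
        add_le_add (tropMinor_le_sum M (card_insert_S hjS) h_image_S)
          (tropMinor_le_sum M (card_erase_T hjT) h_image_T)
    _ = ∑ b, M b (f b) + ∑ b, M b (g b) := by
        simp only [← sum_add_distrib]
        refine sum_congr rfl fun b _ ↦ ?_
        by_cases hb : b ∈ Q <;> simp [hb, add_comm]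
    _ = tropMinor M (insert i S) + tropMinor M (T.erase i) := by rw [hf_sum, hg_sum]

end TropMinor

/-- The vector of tropical maximal minors of the augmented matrix `V̄`
is a tropical Plücker vector of rank `m`. -/
theorem tauV_isTropPlucker (n m : ℕ) (hm : 1 ≤ m) (hmn : m ≤ n)
    (B : Finset (Fin n)) (hB : B.card = m)
    (V : {i : Fin n // i ∈ B} → {j : Fin n // j ∉ B} → WithTop ℝ) :
    IsTropPlucker n m (tauV n B V) := by
  intro S T hS hT i hi
  have hcard : Fintype.card {i : Fin n // i ∈ B} = m := by simp [hB]
  exact tauV_isTropPlucker_general (augMat n B V) (by lia) (by lia) hi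
end

section
/- Let 𝓑 be a nonempty collection of m-element subsets of {1,…,n} satisfying the basis exchange property (so 𝓑 is the set of bases of a matroid of rank m on {1,…,n}), and let B ∈ 𝓑. Then the vertex figure of the matroid polytope at e_B equals the hyperplane section: convexHull{ e_A : A ∈ 𝓑, |A∖B| = 1 } = convexHull{ e_A : A ∈ 𝓑 } ∩ { x ∈ ℝⁿ : Σ_{i∈B} x_i = m−1 }. -/
open Finset

/-!
By symmetric exchange, an element `a ∈ A \ B` can be traded for some `b ∈ B \ A` so that both
`A - a + b` and `B - b + a` are bases, and
`e_A - e_B = (e_{A - a + b} - e_B) + (e_{B - b + a} - e_B)`. Iterating, the edge directions at `e_B`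
towards the adjacent bases generate a cone containing the polytope translated by `-e_B`. The
functional `x ↦ ∑ i ∈ B, x i` takes one and the same value at all neighbours of `e_B`, and a
different one at `e_B`. So a point of the polytope on the hyperplane through the neighbours is
`e_B` plus a nonnegative combination of edge directions whose coefficients must sum to `1`.
-/

section Convexity

open scoped Pointwise

variable {𝕜 V : Type*} [Field 𝕜] [LinearOrder 𝕜] [IsStrictOrderedRing 𝕜]
  [AddCommGroup V] [Module 𝕜 V]

theorem mem_convexHull_of_mem_hull_of_map_eq {D : Set V} (f : V →ₗ[𝕜] 𝕜) {c : 𝕜} (hc : c ≠ 0)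
    (hD : ∀ d ∈ D, f d = c) {x : V} (hx : x ∈ PointedCone.hull 𝕜 D) (hfx : f x = c) :
    x ∈ convexHull 𝕜 D := by
  obtain ⟨k, w, d, rfl⟩ := Submodule.mem_span_set'.mp hx
  have map_smul_eq (i : Fin k) : f (w i • (d i : V)) = (w i : 𝕜) * c := by
    rw [← hD _ (d i).2]
    exact map_smul f (w i : 𝕜) _
  have sum_weights_mul : (∑ i, (w i : 𝕜)) * c = c := by
    simpa only [map_sum, map_smul_eq, ← Finset.sum_mul] using hfx
  exact mem_convexHull_of_exists_fintype (fun i ↦ (w i : 𝕜)) (fun i ↦ (d i : V))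
    (fun i ↦ (w i).2) (mul_eq_right₀ hc |>.mp sum_weights_mul) (fun i ↦ (d i).2) rfl

theorem convexHull_eq_inter_of_vadd_subset_hull {S T : Set V} {v : V} (f : V →ₗ[𝕜] 𝕜) {c : 𝕜}
    (hTS : T ⊆ S) (hT : ∀ t ∈ T, f t = c) (hv : f v ≠ c)
    (hcone : -v +ᵥ S ⊆ PointedCone.hull 𝕜 (-v +ᵥ T)) :
    convexHull 𝕜 T = convexHull 𝕜 S ∩ {x | f x = c} := by
  apply Set.Subset.antisymm
  · exact Set.subset_inter (convexHull_mono hTS)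
      (convexHull_min hT (convex_hyperplane f.isLinear c))
  · rintro x ⟨hxS, hfx : f x = c⟩
    have translate_mem_cone : -v +ᵥ x ∈ PointedCone.hull 𝕜 (-v +ᵥ T) := by
      refine convexHull_min hcone (PointedCone.convex _) ?_
      rw [convexHull_vadd]
      exact Set.vadd_mem_vadd_set hxS
    have map_translate {y : V} (hy : f y = c) : f (-v +ᵥ y) = c - f v := by
      rw [vadd_eq_add, map_add, map_neg, hy, neg_add_eq_sub]
    have translate_mem_hull : -v +ᵥ x ∈ convexHull 𝕜 (-v +ᵥ T) := by
      refine mem_convexHull_of_mem_hull_of_map_eq f (sub_ne_zero.mpr hv.symm) ?_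
        translate_mem_cone (map_translate hfx)
      rintro _ ⟨t, ht, rfl⟩
      exact map_translate (hT t ht)
    rwa [convexHull_vadd, Set.vadd_mem_vadd_set_iff] at translate_mem_hull

end Convexity

section Matroid

variable {α : Type*} {M : Matroid α} {A B : Set α}

theorem exists_symm_exchange_of_isBase (hA : M.IsBase A) (hB : M.IsBase B) {a : α}
    (ha : a ∈ A \ B) :
    ∃ b ∈ B \ A, M.IsBase (insert b (A \ {a})) ∧ M.IsBase (insert a (B \ {b})) := by
  obtain ⟨haA, haB⟩ := ha
  have mem_closure_circuit : a ∈ M.closure (M.fundCircuit a B \ {a}) :=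
    (hB.fundCircuit_isCircuit (hA.subset_ground haA) haB).mem_closure_sdiff_singleton_of_mem
      (M.mem_fundCircuit a B)
  have notMem_closure : a ∉ M.closure (A \ {a}) := hA.indep.notMem_closure_sdiff_of_mem haA
  -- Otherwise `A \ {a}` would span the fundamental circuit of `a` with respect to `B`.
  obtain ⟨b, ⟨hbC, hba : b ≠ a⟩, hb⟩ :
      ∃ b ∈ M.fundCircuit a B \ {a}, b ∉ M.closure (A \ {a}) :=
    Set.not_subset.mp fun h ↦
      notMem_closure (M.closure_subset_closure_of_subset_closure h mem_closure_circuit)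
  have hbB : b ∈ B := (M.fundCircuit_subset_insert a B hbC).resolve_left hba
  have hbE : b ∈ M.E := hB.subset_ground hbB
  have hbA : b ∉ A := fun h ↦
    hb (M.subset_closure (A \ {a}) (Set.sdiff_subset.trans hA.subset_ground) ⟨h, hba⟩)
  refine ⟨b, ⟨hbB, hbA⟩, hA.exchange_base_of_notMem_closure haA hb, ?_⟩
  apply hB.exchange_isBase_of_indep haB
  rw [Set.insert_sdiff_singleton_comm hba.symm]
  exact (hB.indep.mem_fundCircuit_iff
    (hB.closure_eq.symm ▸ hA.subset_ground haA) haB).mp hbC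

/-- The bases of `M` that differ from `B` by the exchange of a single element. For a base `B`, they
label the neighbours of the vertex `e_B` of the matroid polytope. -/
def adjacentBases (M : Matroid α) (B : Set α) : Set (Set α) :=
  {A | M.IsBase A ∧ (A \ B).encard = 1}

end Matroid

section IndicatorVector

open scoped Pointwise

variable (𝕜 : Type*) {α : Type*}

/-- The 0/1 indicator vector `e_A` of a subset `A` of the coordinates. -/
noncomputable def indicatorVector [Zero 𝕜] [One 𝕜] (A : Set α) : α → 𝕜 := A.indicator 1

theorem indicatorVector_coe_finset [Zero 𝕜] [One 𝕜] [DecidableEq α] (A : Finset α) :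
    indicatorVector 𝕜 (A : Set α) = fun i ↦ if i ∈ A then 1 else 0 := by
  ext i
  simp [indicatorVector, Set.indicator_apply]

theorem indicatorVector_insert_sdiff_singleton [AddGroupWithOne 𝕜] {A : Set α} {a b : α}
    (ha : a ∈ A) (hb : b ∉ A) :
    indicatorVector 𝕜 (insert b (A \ {a})) =
      indicatorVector 𝕜 A - indicatorVector 𝕜 {a} + indicatorVector 𝕜 {b} := by
  classical
  ext i
  rcases eq_or_ne i a with rfl | hia <;> rcases eq_or_ne i b with rfl | hib <;>
    simp_all [indicatorVector, Set.indicator_apply]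

theorem sum_indicatorVector_add_ncard_sdiff [AddCommMonoidWithOne 𝕜] (A : Set α) (B : Finset α) :
    ∑ i ∈ B, indicatorVector 𝕜 A i + (((B : Set α) \ A).ncard : 𝕜) = #B := by
  classical
  have ncard_sdiff : ((B : Set α) \ A).ncard = #{i ∈ B | i ∉ A} := by
    rw [← Set.ncard_coe_finset]
    congr 1
    ext i
    simp
  simp only [indicatorVector, Set.indicator_apply, Pi.one_apply, sum_boole]
  rw [ncard_sdiff, ← Nat.cast_add, card_filter_add_card_filter_not]

theorem sum_indicatorVector_of_mem_adjacentBases [AddCommGroupWithOne 𝕜] {M : Matroid α} {A : Set α}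
    {B : Finset α} (hB : M.IsBase B) (hA : A ∈ adjacentBases M B) :
    ∑ i ∈ B, indicatorVector 𝕜 A i = #B - 1 := by
  have ncard_sdiff : ((B : Set α) \ A).ncard = 1 := by
    rw [hB.ncard_sdiff_comm hA.1, Set.ncard_def, hA.2, ENat.toNat_one]
  rw [← sum_indicatorVector_add_ncard_sdiff 𝕜 A B, ncard_sdiff, Nat.cast_one, add_sub_cancel_right]

theorem neg_vadd_indicatorVector_mem_hull [Field 𝕜] [LinearOrder 𝕜] [IsStrictOrderedRing 𝕜]
    {M : Matroid α} {A B : Set α} (hA : M.IsBase A) (hB : M.IsBase B) (hfin : (A \ B).Finite) :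
    -indicatorVector 𝕜 B +ᵥ indicatorVector 𝕜 A ∈
      PointedCone.hull 𝕜 (-indicatorVector 𝕜 B +ᵥ indicatorVector 𝕜 '' adjacentBases M B) := by
  generalize hD : A \ B = D at hfin
  induction D, hfin using Set.Finite.induction_on generalizing A with
  | empty =>
    rw [hA.eq_of_subset_isBase hB (Set.sdiff_eq_empty.mp hD), vadd_eq_add, neg_add_cancel]
    exact zero_mem _
  | @insert a D haD _ ih =>
    have ha : a ∈ A \ B := hD ▸ Set.mem_insert a D
    obtain ⟨b, hb, hA', hB'⟩ := exists_symm_exchange_of_isBase hA hB ha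
    have sdiff_A' : insert b (A \ {a}) \ B = D := by
      rw [Set.insert_sdiff_of_mem _ hb.1, sdiff_right_comm, hD, Set.insert_sdiff_self_of_notMem haD]
    have sdiff_B' : insert a (B \ {b}) \ B = {a} := by
      rw [Set.insert_sdiff_of_notMem _ ha.2, Set.sdiff_eq_empty.mpr Set.sdiff_subset,
        insert_empty_eq]
    have adjacent_B' : insert a (B \ {b}) ∈ adjacentBases M B :=
      ⟨hB', by rw [sdiff_B', Set.encard_singleton]⟩
    have decomposition : -indicatorVector 𝕜 B +ᵥ indicatorVector 𝕜 A =
        (-indicatorVector 𝕜 B +ᵥ indicatorVector 𝕜 (insert b (A \ {a}))) +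
          (-indicatorVector 𝕜 B +ᵥ indicatorVector 𝕜 (insert a (B \ {b}))) := by
      rw [indicatorVector_insert_sdiff_singleton 𝕜 ha.1 hb.2,
        indicatorVector_insert_sdiff_singleton 𝕜 hb.1 ha.2]
      simp only [vadd_eq_add]
      abel
    rw [decomposition]
    exact add_mem (ih hA' sdiff_A') (PointedCone.subset_hull
      (Set.vadd_mem_vadd_set (Set.mem_image_of_mem _ adjacent_B')))

theorem vertex_figure_eq_hyperplane_section_general [Field 𝕜] [LinearOrder 𝕜]
    [IsStrictOrderedRing 𝕜] {M : Matroid α} {B : Finset α} (hB : M.IsBase B) :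
    convexHull 𝕜 (indicatorVector 𝕜 '' adjacentBases M B) =
      convexHull 𝕜 (indicatorVector 𝕜 '' {A | M.IsBase A}) ∩
        {x | ∑ i ∈ B, x i = (#B : 𝕜) - 1} := by
  let coordSum : (α → 𝕜) →ₗ[𝕜] 𝕜 := ∑ i ∈ B, LinearMap.proj i
  have coordSum_apply (x : α → 𝕜) : coordSum x = ∑ i ∈ B, x i := by
    simp [coordSum, LinearMap.sum_apply]
  have coordSum_self : coordSum (indicatorVector 𝕜 (B : Set α)) = #B := by
    simpa [coordSum_apply] using sum_indicatorVector_add_ncard_sdiff 𝕜 (B : Set α) B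
  simp only [← coordSum_apply]
  apply convexHull_eq_inter_of_vadd_subset_hull coordSum (v := indicatorVector 𝕜 (B : Set α))
  · exact Set.image_mono fun A hA ↦ hA.1
  · rintro _ ⟨A, hA, rfl⟩
    rw [coordSum_apply, sum_indicatorVector_of_mem_adjacentBases 𝕜 hB hA]
  · rw [coordSum_self]
    exact (sub_one_lt _).ne'
  · rintro _ ⟨_, ⟨A, hA, rfl⟩, rfl⟩
    have : M.RankFinite := hB.rankFinite_of_finite B.finite_toSet
    exact neg_vadd_indicatorVector_mem_hull 𝕜 hA hB hA.finite.sdiff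

section FinsetBases

variable [DecidableEq α] {𝓑 : Set (Finset α)} (hne : 𝓑.Nonempty)
  (hex : ∀ A ∈ 𝓑, ∀ B ∈ 𝓑, ∀ a ∈ A \ B, ∃ b ∈ B \ A, insert b (A.erase a) ∈ 𝓑)

/-- The matroid on the ground set `α` whose bases are the members of `𝓑`, a nonempty family of
finite sets with the basis exchange property. -/
def matroidOfFinsetBases : Matroid α :=
  Matroid.ofExistsFiniteIsBase Set.univ (fun X ↦ ∃ A ∈ 𝓑, (A : Set α) = X)
    (let ⟨A, hA⟩ := hne; ⟨A, ⟨A, hA, rfl⟩, A.finite_toSet⟩)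
    (by
      rintro _ _ ⟨A, hA, rfl⟩ ⟨B, hB, rfl⟩ a ha
      obtain ⟨b, hb, hbA⟩ := hex A hA B hB a (by simpa using ha)
      exact ⟨b, by simpa using hb, _, hbA, by simp⟩)
    (fun _ _ ↦ Set.subset_univ _)

theorem isBase_matroidOfFinsetBases_iff {X : Set α} :
    (matroidOfFinsetBases hne hex).IsBase X ↔ ∃ A ∈ 𝓑, (A : Set α) = X :=
  Iff.rfl

theorem image_indicatorVector_isBase_matroidOfFinsetBases [Zero 𝕜] [One 𝕜] :
    indicatorVector 𝕜 '' {A | (matroidOfFinsetBases hne hex).IsBase A} =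
      {x | ∃ A ∈ 𝓑, x = fun i ↦ if i ∈ A then 1 else 0} := by
  ext x
  simp [isBase_matroidOfFinsetBases_iff, indicatorVector_coe_finset, eq_comm (a := x)]

theorem image_indicatorVector_adjacentBases_matroidOfFinsetBases [Zero 𝕜] [One 𝕜]
    (B : Finset α) :
    indicatorVector 𝕜 '' adjacentBases (matroidOfFinsetBases hne hex) B =
      {x | ∃ A ∈ 𝓑, #(A \ B) = 1 ∧ x = fun i ↦ if i ∈ A then 1 else 0} := by
  have encard_sdiff_eq_one (A : Finset α) :
      ((A : Set α) \ B).encard = 1 ↔ #(A \ B) = 1 := by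
    rw [← coe_sdiff, Set.encard_coe_eq_coe_finsetCard, Nat.cast_eq_one]
  ext x
  simp [isBase_matroidOfFinsetBases_iff, adjacentBases, encard_sdiff_eq_one,
    indicatorVector_coe_finset, and_assoc, eq_comm (a := x)]

end FinsetBases

end IndicatorVector

/-- The vertex figure of a matroid polytope at the vertex `e_B` equals
the intersection of the polytope with the hyperplane `∑_{i ∈ B} x_i = m - 1`. -/
theorem vertex_figure_eq_hyperplane_section (n m : ℕ) (hm : 1 ≤ m) (hmn : m ≤ n)
    (𝓑 : Finset (Finset (Fin n))) (hne : 𝓑.Nonempty)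
    (hcard : ∀ A ∈ 𝓑, A.card = m)
    (hex : ∀ A ∈ 𝓑, ∀ B ∈ 𝓑, ∀ a ∈ A \ B, ∃ b ∈ B \ A, insert b (A.erase a) ∈ 𝓑)
    (B : Finset (Fin n)) (hB : B ∈ 𝓑) :
    convexHull ℝ {x : Fin n → ℝ | ∃ A ∈ 𝓑, (A \ B).card = 1 ∧
        x = fun i => if i ∈ A then (1 : ℝ) else 0}
      = convexHull ℝ {x : Fin n → ℝ | ∃ A ∈ 𝓑, x = fun i => if i ∈ A then (1 : ℝ) else 0}
        ∩ {x : Fin n → ℝ | ∑ i ∈ B, x i = (m : ℝ) - 1} := by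
  simpa only [image_indicatorVector_adjacentBases_matroidOfFinsetBases,
    image_indicatorVector_isBase_matroidOfFinsetBases, mem_coe, hcard B hB] using
    vertex_figure_eq_hyperplane_section_general ℝ
      (M := matroidOfFinsetBases (𝓑 := 𝓑) (coe_nonempty.mpr hne) hex) ⟨B, hB, rfl⟩
end

section
/- Let p be a tropical Plücker vector of rank m on {1,…,n}, let B ∈ supp(p), let v ∈ Σ_B, and let a ∈ {1,…,n}∖B. Then v is tropically orthogonal to the fundamental circuit c_{B∪{a}} if and only if there exists b ∈ B such that (B∪{a})∖{b} ∈ supp(p) and w_p(v,(B∪{a})∖{b}) ≥ w_p(v,A) for every A ∈ supp(p); that is, if and only if some basis of the form (B∪{a})∖{b} with b ∈ B also has maximal v-weight. -/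
open Finset

/-!
For `i ∈ S` with `p (S ∖ i)` finite, the `i`-th tropical term `v i + (c_S) i` equals
`∑ j ∈ S, v j - w_p(v, S ∖ i)`: up to a constant depending only on `S`, small terms are large
weights. For `S = B ∪ a` with `B` of maximal weight, the minimal term is therefore attained at `a`,
and orthogonality means that it is attained again at some `b ≠ a`, i.e. that `(B ∪ a) ∖ b` has the
same weight as `B`.
-/

section

variable {n m : ℕ}

theorem tropOrth_iff_exists_ne_eq {x y : Fin n → WithTop ℝ} {a : Fin n}
    (hfin : x a + y a ≠ ⊤) (hmin : ∀ k, x a + y a ≤ x k + y k) :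
    TropOrth n x y ↔ ∃ b ≠ a, x b + y b = x a + y a := by
  constructor
  · rintro (htop | ⟨i, j, hij, heq, hle⟩)
    · exact absurd (htop a) hfin
    · have hia : x i + y i = x a + y a := (hle a).antisymm (hmin i)
      rcases eq_or_ne i a with rfl | hne
      · exact ⟨j, hij.symm, heq.symm⟩
      · exact ⟨i, hne, hia⟩
  · rintro ⟨b, hba, heq⟩
    exact Or.inr ⟨a, b, hba.symm, heq.symm, hmin⟩

variable {p : Finset (Fin n) → WithTop ℝ} {v : Fin n → ℝ} {A B S : Finset (Fin n)} {a b i : Fin n}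

theorem suppMem_erase_iff (hS : S.card = m + 1) (hi : i ∈ S) :
    suppMem n m p (S.erase i) ↔ p (S.erase i) ≠ ⊤ :=
  and_iff_right (by rw [card_erase_of_mem hi, hS, Nat.add_sub_cancel])

theorem coe_add_circVec_ne_top_iff :
    (v i : WithTop ℝ) + circVec n p S i ≠ ⊤ ↔ i ∈ S ∧ p (S.erase i) ≠ ⊤ := by
  by_cases hi : i ∈ S <;> simp [circVec, hi]

theorem coe_add_circVec_eq (hi : i ∈ S) (hp : p (S.erase i) ≠ ⊤) :
    (v i : WithTop ℝ) + circVec n p S i = ↑(∑ j ∈ S, v j - wgt n p v (S.erase i)) := by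
  obtain ⟨q, hq⟩ := WithTop.ne_top_iff_exists.mp hp
  rw [circVec, if_pos hi, wgt, ← hq, WithTop.untopD_coe, ← WithTop.coe_add, WithTop.coe_inj,
    ← add_sum_erase S v hi]
  ring

theorem coe_add_circVec_eq_iff (ha : a ∈ S) (hpa : p (S.erase a) ≠ ⊤) :
    (v b : WithTop ℝ) + circVec n p S b = v a + circVec n p S a ↔
      b ∈ S ∧ p (S.erase b) ≠ ⊤ ∧ wgt n p v (S.erase b) = wgt n p v (S.erase a) := by
  rw [← and_assoc, ← coe_add_circVec_ne_top_iff (v := v)]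
  constructor
  · intro heq
    have hfin : (v b : WithTop ℝ) + circVec n p S b ≠ ⊤ :=
      heq ▸ coe_add_circVec_ne_top_iff.mpr ⟨ha, hpa⟩
    obtain ⟨hb, hpb⟩ := coe_add_circVec_ne_top_iff.mp hfin
    rw [coe_add_circVec_eq hb hpb, coe_add_circVec_eq ha hpa, WithTop.coe_inj, sub_right_inj] at heq
    exact ⟨hfin, heq⟩
  · rintro ⟨hfin, hw⟩
    obtain ⟨hb, hpb⟩ := coe_add_circVec_ne_top_iff.mp hfin
    rw [coe_add_circVec_eq hb hpb, coe_add_circVec_eq ha hpa, hw]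

theorem coe_add_circVec_le_of_memSigma (ha : a ∈ S)
    (hB : suppMem n m p (S.erase a)) (hv : memSigma n m p (S.erase a) v) (k : Fin n) :
    (v a : WithTop ℝ) + circVec n p S a ≤ v k + circVec n p S k := by
  by_cases htop : (v k : WithTop ℝ) + circVec n p S k = ⊤
  · exact htop ▸ le_top
  · obtain ⟨hk, hpk⟩ := coe_add_circVec_ne_top_iff.mp htop
    have hS : S.card = m + 1 := by rw [← card_erase_add_one ha, hB.1]
    rw [coe_add_circVec_eq ha hB.2, coe_add_circVec_eq hk hpk, WithTop.coe_le_coe]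
    exact sub_le_sub_left (hv _ ((suppMem_erase_iff hS hk).mpr hpk)) _

theorem memSigma_iff_wgt_eq (hB : suppMem n m p B) (hv : memSigma n m p B v)
    (hA : suppMem n m p A) : memSigma n m p A v ↔ wgt n p v A = wgt n p v B :=
  ⟨fun hAv => (hv A hA).antisymm (hAv B hB), fun hw C hC => hw ▸ hv C hC⟩

theorem tropOrth_circVec_iff_s13 (ha : a ∈ S) (hB : suppMem n m p (S.erase a))
    (hv : memSigma n m p (S.erase a) v) :
    TropOrth n (fun i => (v i : WithTop ℝ)) (circVec n p S) ↔
      ∃ b ∈ S.erase a, suppMem n m p (S.erase b) ∧ memSigma n m p (S.erase b) v := by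
  have hS : S.card = m + 1 := by rw [← card_erase_add_one ha, hB.1]
  rw [tropOrth_iff_exists_ne_eq (coe_add_circVec_ne_top_iff.mpr ⟨ha, hB.2⟩)
    (coe_add_circVec_le_of_memSigma ha hB hv)]
  refine exists_congr fun b => ?_
  rw [coe_add_circVec_eq_iff ha hB.2, mem_erase, and_assoc]
  refine and_congr_right fun _ => and_congr_right fun hb => ?_
  rw [← suppMem_erase_iff hS hb]
  exact and_congr_right fun hA => (memSigma_iff_wgt_eq hB hv hA).symm

theorem orth_fundamental_circuit_iff_general (hB : suppMem n m p B) (hv : memSigma n m p B v)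
    (ha : a ∉ B) :
    TropOrth n (fun i => (v i : WithTop ℝ)) (circVec n p (insert a B)) ↔
      ∃ b ∈ B, suppMem n m p ((insert a B).erase b) ∧
        memSigma n m p ((insert a B).erase b) v := by
  have h := tropOrth_circVec_iff_s13 (m := m) (p := p) (v := v) (mem_insert_self a B)
  rw [erase_insert ha] at h
  exact h hB hv

end

/-- For `v ∈ Σ_B` and `a ∉ B`, `v` is tropically orthogonal to the
fundamental circuit `c_{B ∪ a}` iff some basis of the form `(B ∪ a) ∖ b` with `b ∈ B`
also has maximal `v`-weight. -/
theorem orth_fundamental_circuit_iff (n m : ℕ) (hm : 1 ≤ m) (hmn : m ≤ n)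
    (p : Finset (Fin n) → WithTop ℝ) (hp : IsTropPlucker n m p)
    (B : Finset (Fin n)) (hB : suppMem n m p B)
    (v : Fin n → ℝ) (hv : memSigma n m p B v) (a : Fin n) (ha : a ∉ B) :
    TropOrth n (fun i => (v i : WithTop ℝ)) (circVec n p (insert a B)) ↔
      ∃ b ∈ B, suppMem n m p ((insert a B).erase b) ∧
        ∀ A, suppMem n m p A → wgt n p v A ≤ wgt n p v ((insert a B).erase b) :=
  orth_fundamental_circuit_iff_general hB hv ha
end
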